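/- arXiv:1402.3752 — 7 statements merged into one kernel-verified Lean document; each statement's English description precedes it below -/
import Mathlib

section
/- For every word B = b_1⋯b_h ∈ St_{h,k}, the sum of w̃(σ) = ∏_{(s,t) arch of σ} x_{K − C_σ(s,t)} over all set partitions σ ∈ S(H,K) with ψ(σ) = B equals ∏_{i ∈ {1,…,h}, b_i = •} (x_{E_i(B)} + x_{E_i(B)+1} + ⋯ + x_k), where E_i(B) = #{j < i : b_j = ∘}. -/
/-!
The idea is to build `σ` from right to left, inserting `a = H, H-1, …, 1` into a partition `τ` of
`{a+1,…,H}`. If the letter at `a` is `∘`, then `a` is the maximum of its block, so it must form a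
new singleton, and no arch is created. If the letter is `•`, then `a` joins one of the blocks `b`
of `τ`, arbitrarily chosen, which creates exactly one arch `(a, min b)`. Cover counts of arches
depend only on the elements to the right of the arch's left end, so the arches already present
keep their factors.

The new arch covers the blocks of `τ` whose minimum is at most `min b`; hence its cover count is
the rank of `b` when the blocks are ordered by minima, and runs over `1,…,|τ|` as `b` varies.
As `τ` has one block for each `∘` to the right of `a`, the index `K - C` runs over
`E_a(B),…,k`, independently of `τ`. Summing over `b` gives the factor `x_{E_a(B)} + ⋯ + x_k`.

The two insertion steps are `sum_of_false` and `sum_of_true`, the rank count is `sum_choice`, and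
`sum_lettered` is the resulting induction. The position `H`, absent from the word, always carries
`∘`; the induction runs over the word extended by this letter.
-/

/-- Replace the `(i+1)`-th occurrence of `false` (i.e. `∘`), 0-indexed `i`, reading
from the left, by `true` (i.e. `•`). -/
def fillAt : ℕ → List Bool → List Bool
  | _, [] => []
  | i, true :: rest => true :: fillAt i rest
  | 0, false :: rest => true :: rest
  | (i+1), false :: rest => false :: fillAt i rest

/-- Transition probability of the MJMC, on words encoded as lists of booleans
(`true` = ball `•`, `false` = empty site `∘`).  From `A = a₁⋯a_h`: with probability 1
go to `a₂⋯a_h∘` if `a₁ = ∘`; with probability `x i` go to `T_i (a₂⋯a_h∘)` if `a₁ = •`. -/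
noncomputable def mjmcP (k : ℕ) (x : ℕ → ℝ) : List Bool → List Bool → ℝ
  | [], B => if B = [] then 1 else 0
  | false :: rest, B => if B = rest ++ [false] then 1 else 0
  | true :: rest, B =>
      ∑ i ∈ Finset.range (k + 1), if B = fillAt i (rest ++ [false]) then x i else 0

/-- Auxiliary weight: `e` records the number of `∘`'s seen so far, so that the factor
attached to a `•` at position `i` is `x_{E_i(B)} + ⋯ + x_k`. -/
noncomputable def wordWeightAux (k : ℕ) (x : ℕ → ℝ) : ℕ → List Bool → ℝ
  | _, [] => 1
  | e, false :: rest => wordWeightAux k x (e + 1) rest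
  | e, true :: rest => (∑ j ∈ Finset.Icc e k, x j) * wordWeightAux k x e rest

/-- `w(B) = ∏_{i : b_i = •} (x_{E_i(B)} + ⋯ + x_k)` where `E_i(B) = #{j < i : b_j = ∘}`. -/
noncomputable def wordWeight (k : ℕ) (x : ℕ → ℝ) (B : List Bool) : ℝ :=
  wordWeightAux k x 0 B

/-- The set `St_{h,k}` of words of length `h` with exactly `k` occurrences of `∘`. -/
def stWords (h k : ℕ) : Finset (Fin h → Bool) :=
  Finset.univ.filter (fun B => (List.ofFn B).count false = k)

/-- The normalization factor `Z_{h,k}(x_0,…,x_k) = ∑_{B ∈ St_{h,k}} w(B)`. -/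
noncomputable def Zword (h k : ℕ) (x : ℕ → ℝ) : ℝ :=
  ∑ B ∈ stWords h k, wordWeight k x (List.ofFn B)

/-- `σ↓`: remove the element 1 from the set partition `σ` (deleting its block if it
becomes empty) and shift all remaining elements down by 1. -/
def downShift (σ : Finset (Finset ℕ)) : Finset (Finset ℕ) :=
  (σ.image fun b => (b.erase 1).image (· - 1)).erase ∅

/-- `I_i(τ)`: insert the element `v` into the `(i+1)`-th block of `τ`, blocks being
numbered (from `i = 0`) in increasing order of their maxima. -/
def insertIntoBlock (v i : ℕ) (τ : Finset (Finset ℕ)) : Finset (Finset ℕ) :=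
  τ.image fun b =>
    if (τ.filter fun c => c.sup id < b.sup id).card = i then insert v b else b

/-- Transition probability of the enriched chain on set partitions of `{1,…,h+1}`
into `k+1` blocks: if `{1}` is a block of `σ`, go to `σ↓ ∪ {{h+1}}` with probability
1; otherwise go to `I_i(σ↓)` with probability `x i` for `0 ≤ i ≤ k`. -/
noncomputable def enrichedP (h k : ℕ) (x : ℕ → ℝ) (σ τ : Finset (Finset ℕ)) : ℝ :=
  if ({1} : Finset ℕ) ∈ σ then
    (if τ = insert ({h + 1} : Finset ℕ) (downShift σ) then 1 else 0)
  else
    ∑ i ∈ Finset.range (k + 1),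
      if τ = insertIntoBlock (h + 1) i (downShift σ) then x i else 0

/-- `σ` is a partition of the set `{1,…,H}` into exactly `K` nonempty blocks. -/
def IsSP (H K : ℕ) (σ : Finset (Finset ℕ)) : Prop :=
  (∀ b ∈ σ, b.Nonempty) ∧ (∀ b₁ ∈ σ, ∀ b₂ ∈ σ, b₁ ≠ b₂ → Disjoint b₁ b₂) ∧
    σ.sup id = Finset.Icc 1 H ∧ σ.card = K

instance (H K : ℕ) : DecidablePred (IsSP H K) := fun σ => by
  unfold IsSP; infer_instance

/-- The (finite) set `S(H,K)` of partitions of `{1,…,H}` into `K` nonempty blocks. -/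
def spFinset (H K : ℕ) : Finset (Finset (Finset ℕ)) :=
  ((Finset.Icc 1 H).powerset.powerset).filter (IsSP H K)

/-- The number `C_σ(s,t)` of blocks of `σ` containing at least one element of
`{s, s+1, …, t}`. -/
def coverCount (σ : Finset (Finset ℕ)) (s t : ℕ) : ℕ :=
  (σ.filter fun b => ∃ u ∈ b, s ≤ u ∧ u ≤ t).card

/-- The set of arches of `σ` inside `{1,…,H}`: pairs `(s,t)` with `s < t` lying in a
common block with no element of that block strictly between them. -/
def arches (H : ℕ) (σ : Finset (Finset ℕ)) : Finset (ℕ × ℕ) :=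
  ((Finset.Icc 1 H) ×ˢ (Finset.Icc 1 H)).filter
    (fun p => p.1 < p.2 ∧ ∃ b ∈ σ, p.1 ∈ b ∧ p.2 ∈ b ∧
      ∀ u ∈ b, ¬(p.1 < u ∧ u < p.2))

/-- The enriched weight `w̃(σ) = ∏_{(s,t) arch of σ} x_{K − C_σ(s,t)}`. -/
noncomputable def archWeight (H K : ℕ) (x : ℕ → ℝ) (σ : Finset (Finset ℕ)) : ℝ :=
  ∏ p ∈ arches H σ, x (K - coverCount σ p.1 p.2)

/-- The letter at position `p+1` (for `p : ℕ`) of the word `ψ(σ)`: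
`∘` (= `false`) if `p+1` is the maximum of its block in `σ`, `•` (= `true`) otherwise. -/
def psiLetter (σ : Finset (Finset ℕ)) (p : ℕ) : Bool :=
  if ∃ b ∈ σ, b.sup id = p + 1 then false else true

section Lumping

open Finset

/-- `σ` is a set partition of `{a,…,H}` whose block maxima are exactly the positions `p` with
`β p = false`. For `a = 1` this amounts to `ψ(σ) = B`, with `β` the word `B` extended by
a final `∘` at position `H`. -/
def IsLettered (β : ℕ → Bool) (H a : ℕ) (σ : Finset (Finset ℕ)) : Prop :=
  (∀ b ∈ σ, b.Nonempty) ∧ (∀ b₁ ∈ σ, ∀ b₂ ∈ σ, b₁ ≠ b₂ → Disjoint b₁ b₂) ∧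
    (∀ u, (∃ b ∈ σ, u ∈ b) ↔ a ≤ u ∧ u ≤ H) ∧
    ∀ p, a ≤ p → p ≤ H → ((∃ b ∈ σ, b.sup id = p) ↔ β p = false)

open Classical in
/-- The finite set of all partitions satisfying `IsLettered`. -/
noncomputable def letteredFinset (β : ℕ → Bool) (H a : ℕ) : Finset (Finset (Finset ℕ)) :=
  ((Finset.Icc a H).powerset.powerset).filter (IsLettered β H a)

lemma mem_letteredFinset {β : ℕ → Bool} {H a : ℕ} {σ : Finset (Finset ℕ)} :
    σ ∈ letteredFinset β H a ↔ IsLettered β H a σ := by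
  classical
  simp only [letteredFinset, mem_filter, mem_powerset, and_iff_right_iff_imp]
  intro h b hb
  rw [mem_powerset]
  intro u hu
  exact mem_Icc.2 ((h.2.2.1 u).1 ⟨b, hb, hu⟩)

lemma sup_id_mem {b : Finset ℕ} (hb : b.Nonempty) : b.sup id ∈ b := by
  obtain ⟨i, hi, h⟩ := Finset.exists_mem_eq_sup b hb id
  rw [h]; exact hi

lemma le_sup_id {b : Finset ℕ} {u : ℕ} (hu : u ∈ b) : u ≤ b.sup id :=
  Finset.le_sup (f := id) hu

/-- The minimum of a block (with junk value `0` on `∅`). -/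
noncomputable def blockMin (b : Finset ℕ) : ℕ := sInf (b : Set ℕ)

lemma blockMin_mem {b : Finset ℕ} (hb : b.Nonempty) : blockMin b ∈ b := by
  have := Nat.sInf_mem (s := (b : Set ℕ)) hb
  exact_mod_cast this

lemma blockMin_le {b : Finset ℕ} {u : ℕ} (hu : u ∈ b) : blockMin b ≤ u :=
  Nat.sInf_le (by exact_mod_cast hu)

lemma eq_of_common {β : ℕ → Bool} {H a : ℕ} {σ : Finset (Finset ℕ)} (h : IsLettered β H a σ)
    {b c : Finset ℕ} (hb : b ∈ σ) (hc : c ∈ σ) {u : ℕ} (hub : u ∈ b) (huc : u ∈ c) : b = c := by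
  by_contra hne
  exact Finset.disjoint_left.1 (h.2.1 b hb c hc hne) hub huc

/-- Taking maxima is a bijection from the blocks to the positions carrying `∘`. -/
lemma card_of_isLettered {β : ℕ → Bool} {H a : ℕ} {σ : Finset (Finset ℕ)}
    (h : IsLettered β H a σ) : σ.card = ((Finset.Icc a H).filter (fun p => β p = false)).card := by
  refine Finset.card_bij (fun b _ => b.sup id) ?_ ?_ ?_
  · intro b hb
    have hr := (h.2.2.1 _).1 ⟨b, hb, sup_id_mem (h.1 b hb)⟩
    exact mem_filter.2 ⟨mem_Icc.2 hr, (h.2.2.2 _ hr.1 hr.2).1 ⟨b, hb, rfl⟩⟩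
  · intro b hb c hc hbc
    refine eq_of_common h hb hc (sup_id_mem (h.1 b hb)) ?_
    have := sup_id_mem (h.1 c hc)
    rwa [← hbc] at this
  · intro p hp
    rw [mem_filter, mem_Icc] at hp
    obtain ⟨b, hb, hbp⟩ := (h.2.2.2 p hp.1.1 hp.1.2).2 hp.2
    exact ⟨b, hb, hbp⟩

/-- Ranks run bijectively over `1,…,|S|`. -/
lemma sum_rank_nat (g : ℕ → ℝ) (S : Finset ℕ) :
    ∑ b ∈ S, g ((S.filter fun c => c ≤ b).card) = ∑ j ∈ Finset.Icc 1 S.card, g j := by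
  induction S using Finset.induction_on_max with
  | empty => simp
  | insert m S hm ih =>
    have hmS : m ∉ S := fun h => lt_irrefl _ (hm m h)
    rw [Finset.sum_insert hmS, Finset.card_insert_of_notMem hmS,
      Finset.sum_Icc_succ_top (by omega), ← ih, add_comm]
    congr 1
    · refine Finset.sum_congr rfl fun b hb => ?_
      rw [Finset.filter_insert, if_neg (not_le.2 (hm b hb))]
    · rw [Finset.filter_true_of_mem, Finset.card_insert_of_notMem hmS]
      intro c hc
      rcases Finset.mem_insert.1 hc with rfl | hc
      · exact le_rfl
      · exact (hm c hc).le

lemma sum_rank {α : Type*} [DecidableEq α] (g : ℕ → ℝ) (S : Finset α) (f : α → ℕ)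
    (hf : Set.InjOn f S) :
    ∑ b ∈ S, g ((S.filter fun c => f c ≤ f b).card) = ∑ j ∈ Finset.Icc 1 S.card, g j := by
  rw [← Finset.card_image_of_injOn hf, ← sum_rank_nat, Finset.sum_image hf]
  refine Finset.sum_congr rfl fun b hb => ?_
  rw [Finset.filter_image, Finset.card_image_of_injOn]
  exact hf.mono fun c hc => (Finset.mem_filter.1 hc).1

lemma coverCount_insert {c : Finset ℕ} {ρ : Finset (Finset ℕ)} (hc : c ∉ ρ) (s t : ℕ) :
    coverCount (insert c ρ) s t
      = coverCount ρ s t + if ∃ u ∈ c, s ≤ u ∧ u ≤ t then 1 else 0 := by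
  unfold coverCount
  rw [Finset.filter_insert]
  split_ifs
  · rw [Finset.card_insert_of_notMem (by simp [hc])]
  · simp

/-! ### Adding the new smallest element as a singleton -/

section Singleton

variable {β : ℕ → Bool} {H a : ℕ} {τ : Finset (Finset ℕ)}

lemma notMem_of_mem (h : IsLettered β H (a + 1) τ) {b : Finset ℕ} (hb : b ∈ τ) : a ∉ b := by
  intro ha
  have := (h.2.2.1 a).1 ⟨b, hb, ha⟩
  omega

lemma isLettered_insert_singleton (h : IsLettered β H (a + 1) τ) (haH : a ≤ H)
    (hβ : β a = false) : IsLettered β H a (insert {a} τ) := by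
  have hn : ∀ b ∈ τ, a ∉ b := fun b hb => notMem_of_mem h hb
  obtain ⟨h1, h2, h3, h4⟩ := h
  refine ⟨?_, ?_, ?_, ?_⟩
  · simpa using h1
  · simp only [mem_insert]
    rintro b₁ (rfl | hb₁) b₂ (rfl | hb₂) hne
    · exact absurd rfl hne
    · simpa using hn _ hb₂
    · simpa using hn _ hb₁
    · exact h2 _ hb₁ _ hb₂ hne
  · intro u
    have := h3 u
    simp only [mem_insert, exists_eq_or_imp, mem_singleton, this]
    omega
  · intro p hp hpH
    simp only [mem_insert, exists_eq_or_imp, sup_singleton, id]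
    rcases Nat.eq_or_lt_of_le hp with rfl | hlt
    · simp [hβ]
    · rw [h4 p hlt hpH]
      constructor
      · rintro (rfl | h)
        · omega
        · exact h
      · exact Or.inr

lemma arches_insert_singleton (h : IsLettered β H (a + 1) τ) :
    arches H (insert {a} τ) = arches H τ := by
  ext ⟨s, t⟩
  simp only [arches, mem_filter, mem_insert, exists_eq_or_imp, mem_singleton]
  constructor
  · rintro ⟨hm, hlt, ⟨rfl, rfl, _⟩ | h⟩
    · omega
    · exact ⟨hm, hlt, h⟩
  · rintro ⟨hm, hlt, h⟩
    exact ⟨hm, hlt, Or.inr h⟩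

lemma arch_fst_gt (h : IsLettered β H (a + 1) τ) {p : ℕ × ℕ} (hp : p ∈ arches H τ) :
    a < p.1 := by
  obtain ⟨_, _, b, hb, hpb, _⟩ := mem_filter.1 hp
  exact ((h.2.2.1 _).1 ⟨b, hb, hpb⟩).1

lemma archWeight_insert_singleton (h : IsLettered β H (a + 1) τ) (K : ℕ) (x : ℕ → ℝ) :
    archWeight H K x (insert {a} τ) = archWeight H K x τ := by
  unfold archWeight
  rw [arches_insert_singleton h]
  refine Finset.prod_congr rfl fun p hp => ?_
  have hlt := arch_fst_gt h hp
  rw [coverCount_insert (fun hm => notMem_of_mem h hm (by simp)), if_neg, add_zero]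
  simp only [mem_singleton, exists_eq_left]
  omega

lemma sum_of_false (haH : a ≤ H) (hβ : β a = false) (K : ℕ) (x : ℕ → ℝ) :
    ∑ σ ∈ letteredFinset β H a, archWeight H K x σ
      = ∑ τ ∈ letteredFinset β H (a + 1), archWeight H K x τ := by
  symm
  refine Finset.sum_bij (fun τ _ => insert {a} τ) ?_ ?_ ?_ ?_
  · intro τ hτ
    rw [mem_letteredFinset] at hτ ⊢
    exact isLettered_insert_singleton hτ haH hβ
  · intro τ hτ τ' hτ' heq
    rw [mem_letteredFinset] at hτ hτ'
    have e1 : {a} ∉ τ := fun hm => notMem_of_mem hτ hm (by simp)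
    have e2 : {a} ∉ τ' := fun hm => notMem_of_mem hτ' hm (by simp)
    rw [← Finset.erase_insert e1, heq, Finset.erase_insert e2]
  · intro σ hσ
    rw [mem_letteredFinset] at hσ
    have hσ' := hσ
    obtain ⟨h1, h2, h3, h4⟩ := hσ
    -- the block with maximum `a` can contain nothing but `a`
    obtain ⟨c, hc, hca⟩ := (h4 a le_rfl haH).2 hβ
    have hc' : c = {a} := by
      refine Finset.eq_singleton_iff_unique_mem.2 ⟨hca ▸ sup_id_mem (h1 c hc), fun u hu => ?_⟩
      have := le_sup_id hu
      have := (h3 u).1 ⟨c, hc, hu⟩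
      omega
    subst hc'
    refine ⟨σ.erase {a}, ?_, Finset.insert_erase hc⟩
    rw [mem_letteredFinset]
    refine ⟨fun b hb => h1 b (mem_of_mem_erase hb), fun b hb b' hb' =>
      h2 b (mem_of_mem_erase hb) b' (mem_of_mem_erase hb'), ?_, ?_⟩
    · intro u
      constructor
      · rintro ⟨b, hb, hu⟩
        have := (h3 u).1 ⟨b, mem_of_mem_erase hb, hu⟩
        have hne : u ≠ a := by
          rintro rfl
          exact ne_of_mem_erase hb (eq_of_common hσ' (mem_of_mem_erase hb) hc hu (by simp))
        omega
      · intro hu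
        obtain ⟨b, hb, hub⟩ := (h3 u).2 ⟨by omega, hu.2⟩
        refine ⟨b, mem_erase.2 ⟨?_, hb⟩, hub⟩
        rintro rfl
        rw [mem_singleton] at hub
        omega
    · intro p hp hpH
      rw [← h4 p (by omega) hpH]
      constructor
      · rintro ⟨b, hb, hu⟩
        exact ⟨b, mem_of_mem_erase hb, hu⟩
      · rintro ⟨b, hb, hu⟩
        refine ⟨b, mem_erase.2 ⟨?_, hb⟩, hu⟩
        rintro rfl
        simp at hu
        omega
  · intro τ hτ
    rw [mem_letteredFinset] at hτ
    exact (archWeight_insert_singleton hτ K x).symm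

end Singleton

/-! ### Adding the new smallest element to an existing block -/

section Join

variable {β : ℕ → Bool} {H a : ℕ} {b : Finset ℕ} {ρ : Finset (Finset ℕ)}

lemma sup_insert_of_lt (hb : b.Nonempty) (hlt : ∀ u ∈ b, a < u) :
    (insert a b).sup id = b.sup id := by
  rw [Finset.sup_insert]
  exact sup_eq_right.2 (hlt _ (sup_id_mem hb)).le

/-- Enlarging the block `b` by the smaller element `a` turns lettered partitions of
`{a+1,…,H}` into lettered partitions of `{a,…,H}`, provided the letter at `a` is `•`. -/
lemma isLettered_join (hbρ : b ∉ ρ) (h : IsLettered β H (a + 1) (insert b ρ)) (haH : a ≤ H)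
    (hβ : β a = true) : IsLettered β H a (insert (insert a b) ρ) := by
  have hn : ∀ c ∈ insert b ρ, a ∉ c := fun c hc => notMem_of_mem h hc
  have hbn : b.Nonempty := h.1 b (mem_insert_self _ _)
  have hlt : ∀ c ∈ insert b ρ, ∀ u ∈ c, a < u := fun c hc u hu =>
    ((h.2.2.1 u).1 ⟨c, hc, hu⟩).1
  have hs := sup_insert_of_lt hbn (hlt b (mem_insert_self _ _))
  obtain ⟨h1, h2, h3, h4⟩ := h
  refine ⟨?_, ?_, ?_, ?_⟩
  · simp only [mem_insert, forall_eq_or_imp]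
    exact ⟨Finset.insert_nonempty _ _, fun c hc => h1 c (mem_insert_of_mem hc)⟩
  · have key : ∀ c ∈ ρ, Disjoint (insert a b) c := by
      intro c hc
      rw [Finset.disjoint_insert_left]
      refine ⟨hn c (mem_insert_of_mem hc), h2 _ (mem_insert_self _ _) _ (mem_insert_of_mem hc) ?_⟩
      rintro rfl
      exact hbρ hc
    intro b₁ hb₁ b₂ hb₂ hne
    rcases mem_insert.1 hb₁ with rfl | hb₁' <;> rcases mem_insert.1 hb₂ with rfl | hb₂'
    · exact absurd rfl hne
    · exact key _ hb₂'
    · exact (key _ hb₁').symm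
    · exact h2 _ (mem_insert_of_mem hb₁') _ (mem_insert_of_mem hb₂') hne
  · intro u
    have := h3 u
    simp only [mem_insert, exists_eq_or_imp] at this ⊢
    rw [or_assoc, this]
    omega
  · intro p hp hpH
    rcases Nat.eq_or_lt_of_le hp with rfl | hlt'
    · simp only [hβ, Bool.true_eq_false, iff_false]
      rintro ⟨c, hc, hca⟩
      rcases mem_insert.1 hc with rfl | hc
      · have := hlt b (mem_insert_self _ _) _ (sup_id_mem hbn)
        omega
      · have := hlt c (mem_insert_of_mem hc) _ (sup_id_mem (h1 c (mem_insert_of_mem hc)))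
        omega
    · rw [← h4 p hlt' hpH]
      simp only [mem_insert, exists_eq_or_imp, hs]

/-- Converse of `isLettered_join`: removing `a` from its block. -/
lemma isLettered_of_join (hab : a ∉ b) (hcρ : insert a b ∉ ρ)
    (h : IsLettered β H a (insert (insert a b) ρ)) (haH : a ≤ H)
    (hβ : β a = true) : b ∉ ρ ∧ IsLettered β H (a + 1) (insert b ρ) := by
  have hbn : b.Nonempty := by
    by_contra hb
    rw [Finset.not_nonempty_iff_eq_empty] at hb
    subst hb
    have := (h.2.2.2 a le_rfl haH).1 ⟨_, mem_insert_self _ _, by simp⟩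
    simp [hβ] at this
  have hge : ∀ c ∈ insert (insert a b) ρ, ∀ u ∈ c, a ≤ u := fun c hc u hu =>
    ((h.2.2.1 u).1 ⟨c, hc, hu⟩).1
  have hlt : ∀ u ∈ b, a < u := fun u hu => by
    have := hge _ (mem_insert_self _ _) u (mem_insert_of_mem hu)
    have : a ≠ u := by rintro rfl; exact hab hu
    omega
  have hs := sup_insert_of_lt hbn hlt
  have hdis : ∀ c ∈ ρ, Disjoint (insert a b) c := fun c hc =>
    h.2.1 _ (mem_insert_self _ _) _ (mem_insert_of_mem hc) (by rintro rfl; exact hcρ hc)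
  have hbρ : b ∉ ρ := by
    intro hb
    obtain ⟨u, hu⟩ := hbn
    exact Finset.disjoint_left.1 (hdis b hb) (mem_insert_of_mem hu) hu
  have hna : ∀ c ∈ ρ, a ∉ c := fun c hc => Finset.disjoint_left.1 (hdis c hc) (mem_insert_self _ _)
  obtain ⟨h1, h2, h3, h4⟩ := h
  refine ⟨hbρ, ?_, ?_, ?_, ?_⟩
  · simp only [mem_insert, forall_eq_or_imp]
    exact ⟨hbn, fun c hc => h1 c (mem_insert_of_mem hc)⟩
  · have key : ∀ c ∈ ρ, Disjoint b c := fun c hc =>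
      (Finset.disjoint_insert_left.1 (hdis c hc)).2
    intro b₁ hb₁ b₂ hb₂ hne
    rcases mem_insert.1 hb₁ with rfl | hb₁' <;> rcases mem_insert.1 hb₂ with rfl | hb₂'
    · exact absurd rfl hne
    · exact key _ hb₂'
    · exact (key _ hb₁').symm
    · exact h2 _ (mem_insert_of_mem hb₁') _ (mem_insert_of_mem hb₂') hne
  · intro u
    have := h3 u
    simp only [mem_insert, exists_eq_or_imp] at this ⊢
    constructor
    · intro hu
      have hne : u ≠ a := by
        rintro rfl
        rcases hu with hu | ⟨c, hc, hu⟩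
        · exact hab hu
        · exact hna c hc hu
      have := this.1 (by tauto)
      omega
    · intro hu
      have hne : u ≠ a := by omega
      have := this.2 (by omega)
      tauto
  · intro p hp hpH
    rw [← h4 p (by omega) hpH]
    simp only [mem_insert, exists_eq_or_imp, hs]

lemma arches_join (h : IsLettered β H (a + 1) (insert b ρ)) (ha : 1 ≤ a)
    (haH : a ≤ H) :
    arches H (insert (insert a b) ρ) = insert (a, blockMin b) (arches H (insert b ρ)) := by
  have hbn : b.Nonempty := h.1 b (mem_insert_self _ _)
  have hr : ∀ c ∈ insert b ρ, ∀ u ∈ c, a < u ∧ u ≤ H := fun c hc u hu =>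
    ((h.2.2.1 u).1 ⟨c, hc, hu⟩)
  have hm := blockMin_mem hbn
  have hmr := hr b (mem_insert_self _ _) _ hm
  have hbr := hr b (mem_insert_self _ _)
  ext ⟨s, t⟩
  simp only [arches, mem_filter, mem_insert, exists_eq_or_imp, mem_product, mem_Icc,
    Prod.mk.injEq]
  constructor
  · rintro ⟨hst, hlt, ⟨hs, ht, hu⟩ | h'⟩
    · rcases hs with rfl | hs
      · left
        refine ⟨rfl, ?_⟩
        have ht' : t ∈ b := by
          rcases ht with rfl | ht
          · omega
          · exact ht
        have h1 := blockMin_le ht'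
        have h2 := hu (blockMin b) (Or.inr hm)
        omega
      · right
        have := hbr s hs
        have ht' : t ∈ b := by
          rcases ht with rfl | ht
          · omega
          · exact ht
        exact ⟨hst, hlt, Or.inl ⟨hs, ht', fun u hub => hu u (Or.inr hub)⟩⟩
    · exact Or.inr ⟨hst, hlt, Or.inr h'⟩
  · rintro (⟨rfl, rfl⟩ | ⟨hst, hlt, ⟨hs, ht, hu⟩ | h'⟩)
    · refine ⟨by omega, by omega, Or.inl ⟨Or.inl rfl, Or.inr hm, ?_⟩⟩
      rintro u (rfl | hu)
      · omega
      · have := blockMin_le hu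
        omega
    · refine ⟨hst, hlt, Or.inl ⟨Or.inr hs, Or.inr ht, ?_⟩⟩
      rintro u (rfl | hub)
      · have := hbr s hs
        omega
      · exact hu u hub
    · exact ⟨hst, hlt, Or.inr h'⟩

/-- Joining `a` to the block `b` creates the single new arch `(a, min b)`, which covers exactly
the blocks whose minimum is at most `min b`; the other arches keep their cover counts. -/
lemma archWeight_join (hbρ : b ∉ ρ) (h : IsLettered β H (a + 1) (insert b ρ)) (ha : 1 ≤ a)
    (haH : a ≤ H) (K : ℕ) (x : ℕ → ℝ) :
    archWeight H K x (insert (insert a b) ρ)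
      = x (K - ((insert b ρ).filter fun c => blockMin c ≤ blockMin b).card)
        * archWeight H K x (insert b ρ) := by
  have hbn : b.Nonempty := h.1 b (mem_insert_self _ _)
  have hr : ∀ c ∈ insert b ρ, ∀ u ∈ c, a < u := fun c hc u hu =>
    ((h.2.2.1 u).1 ⟨c, hc, hu⟩).1
  have hcρ : insert a b ∉ ρ := fun hm =>
    notMem_of_mem h (mem_insert_of_mem hm) (mem_insert_self _ _)
  have hm := blockMin_mem hbn
  have hmr := hr b (mem_insert_self _ _) _ hm
  unfold archWeight
  rw [arches_join h ha haH, Finset.prod_insert]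
  · congr 1
    · congr 2
      rw [coverCount_insert hcρ, if_pos ⟨a, mem_insert_self _ _, le_rfl, hmr.le⟩,
        Finset.filter_insert, if_pos le_rfl, Finset.card_insert_of_notMem (by simp [hbρ])]
      unfold coverCount
      congr 2
      refine Finset.filter_congr fun c hc => ?_
      constructor
      · rintro ⟨u, hu, _, hub⟩
        exact (blockMin_le hu).trans hub
      · intro hle
        have hcm := blockMin_mem (h.1 c (mem_insert_of_mem hc))
        exact ⟨_, hcm, (hr c (mem_insert_of_mem hc) _ hcm).le, hle⟩
    · refine Finset.prod_congr rfl fun p hp => ?_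
      have hlt := arch_fst_gt h hp
      rw [coverCount_insert hcρ, coverCount_insert hbρ]
      have : (∃ u ∈ insert a b, p.1 ≤ u ∧ u ≤ p.2) ↔ ∃ u ∈ b, p.1 ≤ u ∧ u ≤ p.2 := by
        simp only [mem_insert, exists_eq_or_imp]
        constructor
        · rintro (h | h)
          · omega
          · exact h
        · exact Or.inr
      simp only [this]
  · intro hp
    exact lt_irrefl _ (arch_fst_gt h hp)

lemma sum_of_true (ha : 1 ≤ a) (haH : a ≤ H) (hβ : β a = true) (K : ℕ) (x : ℕ → ℝ) :
    ∑ σ ∈ letteredFinset β H a, archWeight H K x σ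
      = ∑ τ ∈ letteredFinset β H (a + 1), ∑ b ∈ τ,
        x (K - (τ.filter fun c => blockMin c ≤ blockMin b).card) * archWeight H K x τ := by
  symm
  rw [Finset.sum_sigma']
  refine Finset.sum_bij (fun q _ => insert (insert a q.2) (q.1.erase q.2)) ?_ ?_ ?_ ?_
  · rintro ⟨τ, b⟩ hq
    rw [mem_sigma, mem_letteredFinset] at hq
    rw [mem_letteredFinset]
    exact isLettered_join (notMem_erase _ _) (by rw [insert_erase hq.2]; exact hq.1) haH hβ
  · rintro ⟨τ, b⟩ hq ⟨τ', b'⟩ hq' heq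
    rw [mem_sigma, mem_letteredFinset] at hq hq'
    simp only at heq hq hq'
    have hσ := isLettered_join (b := b) (ρ := τ.erase b) (notMem_erase _ _)
      (by rw [insert_erase hq.2]; exact hq.1) haH hβ
    -- the blocks containing `a` agree, hence so do `b` and `b'`
    have hc : insert a b = insert a b' :=
      eq_of_common hσ (mem_insert_self _ _) (heq ▸ mem_insert_self _ _)
        (mem_insert_self a b) (mem_insert_self a b')
    have hab := notMem_of_mem hq.1 hq.2
    have hab' := notMem_of_mem hq'.1 hq'.2
    have hb : b = b' := by rw [← erase_insert hab, hc, erase_insert hab']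
    subst hb
    have e1 : insert a b ∉ τ.erase b := fun hm =>
      notMem_of_mem hq.1 (mem_of_mem_erase hm) (mem_insert_self _ _)
    have e2 : insert a b ∉ τ'.erase b := fun hm =>
      notMem_of_mem hq'.1 (mem_of_mem_erase hm) (mem_insert_self _ _)
    have e3 : τ.erase b = τ'.erase b := by rw [← erase_insert e1, heq, erase_insert e2]
    have : τ = τ' := by rw [← insert_erase hq.2, e3, insert_erase hq'.2]
    subst this
    rfl
  · intro σ hσ
    rw [mem_letteredFinset] at hσ
    obtain ⟨c, hc, hac⟩ := (hσ.2.2.1 a).2 ⟨le_rfl, haH⟩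
    have hcb : insert a (c.erase a) = c := insert_erase hac
    obtain ⟨hb, hτ⟩ := isLettered_of_join (b := c.erase a) (ρ := σ.erase c) (notMem_erase _ _)
      (by rw [hcb]; exact notMem_erase _ _) (by rw [hcb, insert_erase hc]; exact hσ) haH hβ
    refine ⟨⟨insert (c.erase a) (σ.erase c), c.erase a⟩, ?_, ?_⟩
    · rw [mem_sigma, mem_letteredFinset]
      exact ⟨hτ, mem_insert_self _ _⟩
    · simp only
      rw [erase_insert hb, hcb, insert_erase hc]
  · rintro ⟨τ, b⟩ hq
    rw [mem_sigma, mem_letteredFinset] at hq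
    simp only at hq
    have := archWeight_join (b := b) (ρ := τ.erase b) (notMem_erase _ _)
      (by rw [insert_erase hq.2]; exact hq.1) ha haH K x
    rw [insert_erase hq.2] at this
    exact this.symm

end Join

/-- The sum over the block joined by the new element: the cover counts of the possible new
arches are `1,…,|τ|`, and `|τ| = k + 1 - e` when `e` block maxima lie further left. -/
lemma sum_choice {β : ℕ → Bool} {H a : ℕ} {τ : Finset (Finset ℕ)} (h : IsLettered β H a τ)
    (x : ℕ → ℝ) {e k : ℕ} (he : e + τ.card = k + 1) :
    ∑ b ∈ τ, x (k + 1 - (τ.filter fun c => blockMin c ≤ blockMin b).card)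
      = ∑ j ∈ Finset.Icc e k, x j := by
  have hinj : Set.InjOn blockMin (τ : Set (Finset ℕ)) := by
    intro b hb c hc hbc
    exact eq_of_common h hb hc (blockMin_mem (h.1 b hb)) (hbc ▸ blockMin_mem (h.1 c hc))
  rw [sum_rank (fun n => x (k + 1 - n)) τ blockMin hinj]
  refine Finset.sum_bij' (fun j _ => k + 1 - j) (fun j _ => k + 1 - j) ?_ ?_ ?_ ?_ ?_
  · simp only [mem_Icc]; omega
  · simp only [mem_Icc]; omega
  · simp only [mem_Icc]; omega
  · simp only [mem_Icc]; omega
  · intros; rfl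

/-- The lumping identity for partitions of `{a,…,H}`, by downward induction on `a`; here `n` is
the number of elements and `e` the number of blocks still to be created further left. -/
lemma sum_lettered (β : ℕ → Bool) (H k : ℕ) (x : ℕ → ℝ) (n : ℕ) :
    ∀ a e : ℕ, 1 ≤ a → a + n = H + 1 →
      e + ((Finset.Icc a H).filter (fun p => β p = false)).card = k + 1 →
      ∑ σ ∈ letteredFinset β H a, archWeight H (k + 1) x σ
        = wordWeightAux k x e ((List.range' a n).map β) := by
  induction n with
  | zero =>
    intro a e ha han he
    have : letteredFinset β H a = {∅} := by
      ext σ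
      rw [mem_letteredFinset, mem_singleton]
      constructor
      · intro h
        refine Finset.eq_empty_of_forall_notMem fun b hb => ?_
        obtain ⟨u, hu⟩ := h.1 b hb
        have := (h.2.2.1 u).1 ⟨b, hb, hu⟩
        omega
      · rintro rfl
        refine ⟨by simp, by simp, fun u => ?_, fun p hp hpH => by omega⟩
        simp
        omega
    rw [this]
    simp [wordWeightAux, archWeight, arches]
  | succ n ih =>
    intro a e ha han he
    have haH : a ≤ H := by omega
    rw [List.range'_succ, List.map_cons]
    rw [← Finset.insert_Icc_add_one_left_eq_Icc haH, Finset.filter_insert] at he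
    cases hβ : β a with
    | false =>
      rw [if_pos hβ, Finset.card_insert_of_notMem (by simp)] at he
      rw [sum_of_false haH hβ, wordWeightAux]
      exact ih (a + 1) (e + 1) (by omega) (by omega) (by omega)
    | true =>
      rw [if_neg (by simp [hβ])] at he
      rw [sum_of_true ha haH hβ, wordWeightAux,
        ← ih (a + 1) e (by omega) (by omega) he, Finset.mul_sum]
      refine Finset.sum_congr rfl fun τ hτ => ?_
      rw [mem_letteredFinset] at hτ
      rw [← Finset.sum_mul, sum_choice hτ x (by rw [card_of_isLettered hτ]; exact he)]

lemma wordWeightAux_append_false (k : ℕ) (x : ℕ → ℝ) (L : List Bool) :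
    ∀ e, wordWeightAux k x e (L ++ [false]) = wordWeightAux k x e L := by
  induction L with
  | nil => intro e; simp [wordWeightAux]
  | cons c L ih =>
    intro e
    cases c <;> simp [wordWeightAux, ih]

/-- The word `B`, read at the positions `1,…,h` and extended by `∘` to the right; in particular
`h + 1`, always a block maximum, carries `∘`. The value at `0` is irrelevant. -/
def extendWord {h : ℕ} (B : Fin h → Bool) (p : ℕ) : Bool :=
  if hp : p - 1 < h then B ⟨p - 1, hp⟩ else false

lemma map_extendWord {h : ℕ} (B : Fin h → Bool) :
    (List.range' 1 (h + 1)).map (extendWord B) = List.ofFn B ++ [false] := by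
  rw [List.range'_concat, List.map_append]
  congr 1
  · apply List.ext_getElem
    · simp
    · intro i h1 h2
      have : i < h := by simpa using h2
      simp [extendWord, this]
  · simp [extendWord]

lemma card_false_range' (β : ℕ → Bool) (H : ℕ) :
    ((Finset.Icc 1 H).filter (fun p => β p = false)).card
      = ((List.range' 1 H).map β).count false := by
  induction H with
  | zero => simp
  | succ H ih =>
    rw [← Finset.insert_Icc_right_eq_Icc_add_one (by omega), Finset.filter_insert,
      List.range'_concat, List.map_append, List.count_append, ← ih, Nat.one_mul, Nat.add_comm 1 H]
    cases hβ : β (H + 1)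
    · rw [if_pos rfl, Finset.card_insert_of_notMem (by simp)]
      simp [hβ]
    · simp [hβ]

lemma filter_spFinset {h k : ℕ} {B : Fin h → Bool}
    (hcard : ((Finset.Icc 1 (h + 1)).filter (fun p => extendWord B p = false)).card = k + 1) :
    (spFinset (h + 1) (k + 1)).filter (fun σ => (fun i : Fin h => psiLetter σ (i : ℕ)) = B)
      = letteredFinset (extendWord B) (h + 1) 1 := by
  ext σ
  have hsup : σ.sup id = Finset.Icc 1 (h + 1) ↔
      ∀ u, (∃ b ∈ σ, u ∈ b) ↔ 1 ≤ u ∧ u ≤ h + 1 := by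
    rw [Finset.ext_iff]
    simp [Finset.mem_sup]
  rw [mem_letteredFinset]
  constructor
  · intro hσ
    obtain ⟨h0, hψ⟩ := mem_filter.1 hσ
    obtain ⟨h1, h2, h3, h4⟩ := (mem_filter.1 h0).2
    rw [hsup] at h3
    refine ⟨h1, h2, h3, fun p hp hpH => ?_⟩
    by_cases hph : p - 1 < h
    · have := congrFun hψ ⟨p - 1, hph⟩
      simp only [extendWord, hph, dif_pos, ← this, psiLetter]
      rw [Nat.sub_add_cancel hp]
      simp
    · have hpe : p = h + 1 := by omega
      subst hpe
      simp only [extendWord, hph, dif_neg, not_false_eq_true, iff_true]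
      obtain ⟨b, hb, hpb⟩ := (h3 (h + 1)).2 ⟨hp, le_rfl⟩
      refine ⟨b, hb, le_antisymm ?_ (le_sup_id hpb)⟩
      exact ((h3 _).1 ⟨b, hb, sup_id_mem (h1 b hb)⟩).2
  · intro hσ
    have hc := card_of_isLettered hσ
    rw [hcard] at hc
    obtain ⟨h1, h2, h3, h4⟩ := hσ
    refine mem_filter.2 ⟨mem_filter.2 ⟨?_, h1, h2, hsup.2 h3, hc⟩, ?_⟩
    · rw [mem_powerset]
      intro b hb
      rw [mem_powerset]
      intro u hu
      exact mem_Icc.2 ((h3 u).1 ⟨b, hb, hu⟩)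
    · funext i
      have := h4 (i + 1) (by omega) (by omega)
      simp only [psiLetter, this]
      simp only [extendWord, Nat.add_sub_cancel, i.2, dif_pos]
      cases B i <;> simp

end Lumping

/-- for every `B ∈ St_{h,k}`, the sum of
`w̃(σ) = ∏_{(s,t) arch of σ} x_{K−C_σ(s,t)}` over all `σ ∈ S(H,K)` with `ψ(σ) = B`
equals `∏_{i : b_i = •} (x_{E_i(B)} + ⋯ + x_k)`. -/
theorem enriched_lumping (h k : ℕ) (hk : k ≤ h) (x : ℕ → ℝ)
    (B : Fin h → Bool) (hB : B ∈ stWords h k) :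
    ∑ σ ∈ (spFinset (h + 1) (k + 1)).filter
        (fun σ => (fun i : Fin h => psiLetter σ (i : ℕ)) = B),
      archWeight (h + 1) (k + 1) x σ
      = wordWeight k x (List.ofFn B) := by
  have hcount : (List.ofFn B).count false = k := (Finset.mem_filter.1 hB).2
  have hcard : ((Finset.Icc 1 (h + 1)).filter (fun p => extendWord B p = false)).card = k + 1 := by
    rw [card_false_range', map_extendWord, List.count_append, hcount]
    simp
  rw [filter_spFinset hcard,
    sum_lettered (extendWord B) (h + 1) k x (h + 1) 1 0 le_rfl (by omega) (by omega),
    map_extendWord, wordWeightAux_append_false, wordWeight]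
end

section
/- For the Unbounded Multivariate Juggling Markov Chain with ℓ balls, the measure w on Par_{∞,ℓ} defined by w(λ) = ∏_{i=1}^{ℓ} y_{λ_i}, where y_m = ∑_{j=m}^{∞} x_j, is invariant: for every λ ∈ Par_{∞,ℓ}, ∑_{μ ∈ Par_{∞,ℓ}} w(μ) P_{μ,λ} = w(λ). -/
/-!
Write `y m = ∑' j, x (m + j)`, so that `y m = x m + y (m + 1)` and `y 0 = 1`. A state `Λ` with
`ℓ` parts has exactly `ℓ + 1` possible predecessors: `Λ + 1` (all parts raised by one), reached
with probability `1`, and for each position `j` the state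
`(Λ₁ + 1, …, Λ_{j-1} + 1, Λ_{j+1}, …, Λ_ℓ, 0)`, from which inserting the part `Λ_j` gives `Λ`
with probability `x Λ_j`. These are pairwise distinct, even when `Λ` has repeated parts. The
invariance equation is therefore the telescoping identity
`∑ j, (∏_{i<j} y (Λ_i + 1)) * x Λ_j * (∏_{i>j} y Λ_i) + ∏ i, y (Λ_i + 1) = ∏ i, y Λ_i`
(`sum_unIns`), proved by induction on `Λ` from the recurrence for `y`.
-/

/-- Insertion of a new part `i` into a nonincreasing list: all parts `> i` (an
initial segment) are decremented by 1, and `i` is inserted in front of the remaining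
parts.  This realizes `(λ₁−1,…,λ_{j−1}−1, i, λ_j, …)` with `j` minimal with `λ_j ≤ i`. -/
def jugIns (i : ℕ) : List ℕ → List ℕ
  | [] => [i]
  | a :: rest => if a ≤ i then i :: a :: rest else (a - 1) :: jugIns i rest

/-- Transition probability of the Unbounded MJMC in the language of integer
partitions with `ℓ` (possibly zero) parts of unbounded size: if the last part is
nonzero, decrement all parts (probability 1); if the last part is zero, drop it and
decrement-and-insert a new part `i` with probability `x i`, `i ≥ 0` arbitrary. -/
noncomputable def uparP (x : ℕ → ℝ) (lam mu : List ℕ) : ℝ :=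
  if lam.getLast? = some 0 then
    ∑' i : ℕ, if mu = jugIns i lam.dropLast then x i else 0
  else if mu = lam.map (· - 1) then 1 else 0

/-! ### Undoing an insertion -/

/-- Deletion of the part at (zero-based) position `j`, all earlier parts being raised by one. For
`L` nonincreasing and `j < L.length`, inserting the deleted part into the result gives back `L`. -/
def unIns : ℕ → List ℕ → List ℕ
  | _, [] => []
  | 0, _ :: L => L
  | j + 1, a :: L => (a + 1) :: unIns j L

theorem length_unIns (L : List ℕ) : ∀ j < L.length, (unIns j L).length + 1 = L.length := by
  induction L with
  | nil => intro j hj; simp at hj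
  | cons a L ih =>
    intro j hj
    cases j with
    | zero => simp [unIns]
    | succ j =>
      have := ih j (by simpa using hj)
      simp [unIns, this]

theorem mem_unIns (L : List ℕ) : ∀ j, ∀ b ∈ unIns j L, ∃ c ∈ L, b ≤ c + 1 := by
  induction L with
  | nil => intro j b hb; simp [unIns] at hb
  | cons a L ih =>
    intro j b hb
    cases j with
    | zero => exact ⟨b, List.mem_cons_of_mem _ hb, by omega⟩
    | succ j =>
      simp only [unIns, List.mem_cons] at hb
      rcases hb with rfl | hb
      · exact ⟨a, by simp, le_rfl⟩
      · obtain ⟨c, hc, h⟩ := ih j b hb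
        exact ⟨c, List.mem_cons_of_mem _ hc, h⟩

theorem pairwise_unIns (L : List ℕ) (hL : L.Pairwise (· ≥ ·)) :
    ∀ j, (unIns j L).Pairwise (· ≥ ·) := by
  induction L with
  | nil => intro j; simp [unIns]
  | cons a L ih =>
    intro j
    rw [List.pairwise_cons] at hL
    cases j with
    | zero => exact hL.2
    | succ j =>
      refine List.pairwise_cons.2 ⟨fun b hb => ?_, ih hL.2 j⟩
      obtain ⟨c, hc, h⟩ := mem_unIns L j b hb
      have := hL.1 c hc
      omega

theorem unIns_inj (L : List ℕ) (hL : L.Pairwise (· ≥ ·)) :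
    ∀ j k, j < L.length → k < L.length → unIns j L = unIns k L → j = k := by
  induction L with
  | nil => intro j k hj; simp at hj
  | cons a L ih =>
    rw [List.pairwise_cons] at hL
    -- Deletion at position `0` leaves a list with all parts at most `a`, whereas deletion at a
    -- later position leaves a list starting with `a + 1`.
    have key : ∀ M, L ≠ (a + 1) :: M := by
      rintro M rfl
      have := hL.1 (a + 1) (by simp)
      omega
    intro j k hj hk h
    cases j with
    | zero =>
      cases k with
      | zero => rfl
      | succ k => exact absurd h (key _)
    | succ j =>
      cases k with
      | zero => exact absurd h.symm (key _)
      | succ k =>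
        simp only [unIns, List.cons.injEq, true_and] at h
        rw [ih hL.2 j k (by simpa using hj) (by simpa using hk) h]

theorem jugIns_unIns (L : List ℕ) (hL : L.Pairwise (· ≥ ·)) :
    ∀ j < L.length, jugIns (L.getD j 0) (unIns j L) = L := by
  induction L with
  | nil => intro j hj; simp at hj
  | cons a L ih =>
    rw [List.pairwise_cons] at hL
    intro j hj
    cases j with
    | zero =>
      cases L with
      | nil => simp [unIns, jugIns]
      | cons b L =>
        have := hL.1 b (by simp)
        simp [unIns, jugIns, this]
    | succ j =>
      have hj' : j < L.length := by simpa using hj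
      have h1 : L.getD j 0 ≤ a := by
        rw [List.getD_eq_getElem _ _ hj']
        exact hL.1 _ (List.getElem_mem hj')
      have h2 : ¬ (a + 1 ≤ L.getD j 0) := by omega
      have h3 := ih hL.2 j hj'
      simp only [unIns, jugIns, List.getD_cons_succ, if_neg h2, h3, Nat.add_sub_cancel]

/-- Every way of obtaining a list by an insertion is undone by some deletion `unIns j`. -/
theorem exists_of_jugIns (i : ℕ) (N : List ℕ) :
    ∃ j < (jugIns i N).length, N = unIns j (jugIns i N) := by
  induction N with
  | nil => exact ⟨0, by simp [jugIns], by simp [jugIns, unIns]⟩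
  | cons a N ih =>
    by_cases h : a ≤ i
    · exact ⟨0, by simp [jugIns, h], by simp [jugIns, h, unIns]⟩
    · obtain ⟨j, hj, e⟩ := ih
      refine ⟨j + 1, by simpa [jugIns, h] using hj, ?_⟩
      have : a - 1 + 1 = a := by omega
      simp only [jugIns, h, if_false, unIns, this, ← e]

theorem jugIns_inj (i k : ℕ) (N : List ℕ) (h : jugIns i N = jugIns k N) : i = k := by
  induction N with
  | nil => simpa [jugIns] using h
  | cons a N ih =>
    by_cases h1 : a ≤ i <;> by_cases h2 : a ≤ k <;> simp [jugIns, h1, h2] at h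
    · exact h
    · omega
    · omega
    · exact ih h

/-! ### The telescoping identity -/

/-- The telescoping identity behind invariance: the total weight flowing into `L` is the weight
of `L`. -/
theorem sum_unIns (x y : ℕ → ℝ) (hy : ∀ m, y m = x m + y (m + 1)) (L : List ℕ) :
    ∑ j ∈ Finset.range L.length, ((unIns j L).map y).prod * x (L.getD j 0)
      + ((L.map (· + 1)).map y).prod = (L.map y).prod := by
  induction L with
  | nil => simp
  | cons a L ih =>
    rw [List.length_cons, Finset.sum_range_succ']
    simp only [unIns, List.map_cons, List.prod_cons, List.getD_cons_succ, List.getD_cons_zero,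
      mul_assoc, ← Finset.mul_sum]
    rw [hy a]
    linear_combination y (a + 1) * ih

/-! ### Predecessors of a state -/

/-- The predecessors of `L`: `none` is the state with all parts raised by one, and `some j` is the
state with last part `0` from which inserting the part at position `j` gives `L`. -/
def predState (L : List ℕ) {n : ℕ} : Option (Fin n) → List ℕ
  | none => L.map (· + 1)
  | some j => unIns j L ++ [0]

theorem uparP_unIns (x : ℕ → ℝ) (L : List ℕ) (hL : L.Pairwise (· ≥ ·)) (j : ℕ)
    (hj : j < L.length) : uparP x (unIns j L ++ [0]) L = x (L.getD j 0) := by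
  have h := jugIns_unIns L hL j hj
  have h0 : (unIns j L ++ [0]).getLast? = some 0 := by simp
  rw [uparP, if_pos h0, List.dropLast_concat, tsum_eq_single (L.getD j 0), if_pos h.symm]
  intro k hk
  refine if_neg fun e => hk (jugIns_inj _ _ _ (e.symm.trans h.symm))

theorem getLast?_map_succ_ne (L : List ℕ) : (L.map (· + 1)).getLast? ≠ some 0 := by
  intro h
  simpa using List.mem_of_getLast? h

theorem uparP_map_succ (x : ℕ → ℝ) (L : List ℕ) : uparP x (L.map (· + 1)) L = 1 := by
  rw [uparP, if_neg (getLast?_map_succ_ne L), if_pos]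
  simp [Function.comp_def]

theorem pos_of_getLast?_ne (M : List ℕ) (hM : M.Pairwise (· ≥ ·)) (h : M.getLast? ≠ some 0) :
    ∀ a ∈ M, 1 ≤ a := by
  induction M using List.reverseRecOn with
  | nil => simp
  | append_singleton M b _ =>
    have hb : b ≠ 0 := by simpa using h
    rw [List.pairwise_append] at hM
    intro a ha
    rw [List.mem_append, List.mem_singleton] at ha
    rcases ha with ha | rfl
    · have := hM.2.2 a ha b (by simp)
      omega
    · omega

/-- The family `predState L` is complete: it contains every state with a nonzero transition
probability into `L`. -/
theorem exists_predState (x : ℕ → ℝ) (n : ℕ) (L M : List ℕ) (hn : L.length = n)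
    (hM : M.Pairwise (· ≥ ·)) (h : uparP x M L ≠ 0) :
    ∃ o : Option (Fin n), predState L o = M := by
  by_cases h0 : M.getLast? = some 0
  · rw [uparP, if_pos h0] at h
    obtain ⟨i, hi⟩ : ∃ i, L = jugIns i M.dropLast := by
      by_contra! hne
      exact h (by simp [hne])
    obtain ⟨j, hj, e⟩ := exists_of_jugIns i M.dropLast
    rw [← hi] at hj e
    refine ⟨some ⟨j, hn ▸ hj⟩, ?_⟩
    rw [predState, ← e]
    exact List.dropLast_append_getLast? 0 h0
  · rw [uparP, if_neg h0] at h
    have hL : L = M.map (· - 1) := by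
      by_contra hne
      exact h (if_neg hne)
    refine ⟨none, ?_⟩
    rw [predState, hL, List.map_map]
    conv_rhs => rw [← List.map_id M]
    refine List.map_congr_left fun a ha => ?_
    have := pos_of_getLast?_ne M hM h0 a ha
    simp only [Function.comp_apply, id]
    omega

theorem predState_injective (n : ℕ) (L : List ℕ) (hn : L.length = n)
    (hL : L.Pairwise (· ≥ ·)) : Function.Injective (predState L (n := n)) := by
  have key : ∀ N : List ℕ, L.map (· + 1) ≠ N ++ [0] := fun N e =>
    getLast?_map_succ_ne L (by rw [e]; simp)
  rintro (_ | j) (_ | k) h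
  · rfl
  · exact absurd h (key _)
  · exact absurd h.symm (key _)
  · have h' := List.append_cancel_right h
    exact congrArg some (Fin.ext (unIns_inj L hL j k (hn ▸ j.2) (hn ▸ k.2) h'))

theorem length_predState (n : ℕ) (L : List ℕ) (hn : L.length = n) (o : Option (Fin n)) :
    (predState L o).length = n := by
  cases o with
  | none => simpa [predState] using hn
  | some j => simpa [predState, ← hn] using length_unIns L j (hn ▸ j.2)

theorem pairwise_predState (n : ℕ) (L : List ℕ) (hL : L.Pairwise (· ≥ ·))
    (o : Option (Fin n)) : (predState L o).Pairwise (· ≥ ·) := by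
  cases o with
  | none =>
    rw [predState, List.pairwise_map]
    exact hL.imp fun h => Nat.succ_le_succ h
  | some j =>
    rw [predState, List.pairwise_append]
    exact ⟨pairwise_unIns L hL j, by simp, by simp⟩

/-! ### Invariance -/

theorem pairwise_ofFn_of_antitone {n : ℕ} (f : Fin n → ℕ) (hf : ∀ i j : Fin n, i ≤ j → f j ≤ f i) :
    (List.ofFn f).Pairwise (· ≥ ·) :=
  List.pairwise_ofFn.2 fun i j h => hf i j h.le

theorem exists_ofFn_eq {n : ℕ} (M : List ℕ) (hn : M.length = n) (hM : M.Pairwise (· ≥ ·)) :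
    ∃ f : {f : Fin n → ℕ // ∀ i j : Fin n, i ≤ j → f j ≤ f i}, List.ofFn f.1 = M := by
  subst hn
  refine ⟨⟨M.get, fun i j h => ?_⟩, List.ofFn_get M⟩
  rcases h.eq_or_lt with rfl | h
  · exact le_rfl
  · exact List.pairwise_iff_get.1 hM i j h

/-- the measure `w(λ) = ∏_{i=1}^ℓ y_{λ_i}`, with
`y_m = ∑_{j=m}^∞ x_j`, is invariant for the UMJMC with `ℓ` balls.  Elements of
`Par_{∞,ℓ}` are encoded as nonincreasing tuples `Fin ℓ → ℕ`. -/
theorem umjmc_invariant (ℓ : ℕ) (x : ℕ → ℝ) (hx : ∀ i, 0 ≤ x i)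
    (hsx : Summable x) (hsum : ∑' i : ℕ, x i = 1)
    (lam : Fin ℓ → ℕ) (hanti : ∀ i j : Fin ℓ, i ≤ j → lam j ≤ lam i) :
    ∑' mu : {f : Fin ℓ → ℕ // ∀ i j : Fin ℓ, i ≤ j → f j ≤ f i},
      (∏ i, ∑' j : ℕ, x (mu.1 i + j)) *
        uparP x (List.ofFn mu.1) (List.ofFn lam)
      = ∏ i, ∑' j : ℕ, x (lam i + j) := by
  set y : ℕ → ℝ := fun m => ∑' j : ℕ, x (m + j) with hy_def
  have hy : ∀ m, y m = x m + y (m + 1) := by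
    intro m
    have hs : Summable fun j => x (m + j) := by
      simpa only [add_comm m] using (summable_nat_add_iff m).2 hsx
    simp only [hy_def]
    rw [hs.tsum_eq_zero_add]
    simp [add_assoc, add_comm 1]
  have hy0 : y 0 = 1 := by simpa [hy_def] using hsum
  have hw : ∀ f : Fin ℓ → ℕ, ∏ i, ∑' j : ℕ, x (f i + j) = ((List.ofFn f).map y).prod := by
    intro f
    rw [List.map_ofFn, List.prod_ofFn]
    rfl
  simp only [hw]
  have hL := pairwise_ofFn_of_antitone lam hanti
  have hn : (List.ofFn lam).length = ℓ := List.length_ofFn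
  generalize List.ofFn lam = L at hL hn
  choose e he using fun o : Option (Fin ℓ) =>
    exists_ofFn_eq _ (length_predState ℓ L hn o) (pairwise_predState ℓ L hL o)
  have he_inj : Function.Injective e := fun o p h =>
    predState_injective ℓ L hn hL (by rw [← he o, ← he p, h])
  rw [← he_inj.tsum_eq, tsum_fintype, Fintype.sum_option]
  · simp only [he]
    have hsome : ∀ j : Fin ℓ, ((predState L (some j)).map y).prod * uparP x (predState L (some j)) L
        = ((unIns j L).map y).prod * x (L.getD j 0) := by
      intro j
      rw [predState, uparP_unIns x L hL j (hn ▸ j.2)]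
      simp [hy0]
    rw [Finset.sum_congr rfl fun j _ => hsome j, predState, uparP_map_succ, mul_one,
      ← sum_unIns x y hy L, add_comm, hn, Finset.sum_range]
  · intro mu hmu
    obtain ⟨o, ho⟩ := exists_predState x ℓ L (List.ofFn mu.1) hn
      (pairwise_ofFn_of_antitone mu.1 mu.2) (right_ne_zero_of_mul hmu)
    exact ⟨o, Subtype.ext (List.ofFn_injective ((he o).trans ho))⟩
end

section
/- Let (x_i)_{i ≥ 0} be nonnegative reals with ∑_{i=0}^{∞} x_i = 1 and set y_m = ∑_{j=m}^{∞} x_j. For ℓ ≥ 1, the total mass Z^{(ℓ)} = ∑_{λ ∈ Par_{∞,ℓ}} ∏_{i=1}^{ℓ} y_{λ_i} is finite if and only if ∑_{i=0}^{∞} i·x_i < ∞. -/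
/-!
Write `y m = ∑' j, x (m + j)`, so that `y ≥ 0` and `y 0 = 1`. Summing the array
`(m, j) ↦ x (m + j)` along rows gives `∑ y m`, and along antidiagonals gives `∑ (n + 1) x n`;
by Tonelli `y` is summable iff `i ↦ i * x i` is (`summable_tail_iff`).

If `y` is summable, then `f ↦ ∏ i, y (f i)` is summable over all tuples `Fin ℓ → ℕ`
(`summable_pi_prod`), hence over the nonincreasing ones. Conversely, the tuple `(m, 0, …, 0)` has
weight `y m * y 0 ^ (ℓ - 1) = y m`, so restricting to these tuples bounds `∑ y m`.
-/

theorem summable_tail_iff (x : ℕ → ℝ) (hx : ∀ i, 0 ≤ x i) (hsx : Summable x) :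
    Summable (fun m => ∑' j : ℕ, x (m + j)) ↔ Summable (fun i : ℕ => (i : ℝ) * x i) := by
  have rows : Summable (fun p : ℕ × ℕ => x (p.1 + p.2)) ↔
      Summable (fun m => ∑' j : ℕ, x (m + j)) := by
    rw [summable_prod_of_nonneg (fun p => hx _)]
    refine and_iff_right fun m => ?_
    simpa [add_comm] using (summable_nat_add_iff m).2 hsx
  have diags : Summable (fun p : ℕ × ℕ => x (p.1 + p.2)) ↔
      Summable (fun n : ℕ => ((n : ℝ) + 1) * x n) := by
    rw [← Finset.HasAntidiagonal.sigmaAntidiagonalEquivProd.summable_iff,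
      summable_sigma_of_nonneg (f := (fun p : ℕ × ℕ => x (p.1 + p.2)) ∘
        Finset.HasAntidiagonal.sigmaAntidiagonalEquivProd) (fun p => hx _)]
    have h : ∀ n : ℕ, ∑' p : Finset.HasAntidiagonal.antidiagonal n,
        ((fun p : ℕ × ℕ => x (p.1 + p.2)) ∘ Finset.HasAntidiagonal.sigmaAntidiagonalEquivProd) ⟨n, p⟩
          = ((n : ℝ) + 1) * x n := by
      intro n
      have : ∀ p : Finset.HasAntidiagonal.antidiagonal n,
          ((fun p : ℕ × ℕ => x (p.1 + p.2)) ∘ Finset.HasAntidiagonal.sigmaAntidiagonalEquivProd) ⟨n, p⟩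
            = x n := by
        rintro ⟨p, hp⟩
        simp [Finset.HasAntidiagonal.mem_antidiagonal.1 hp]
      rw [tsum_congr this]
      simp
    simp only [h]
    exact and_iff_right fun n => Summable.of_finite
  rw [← rows, diags]
  simp only [add_mul, one_mul]
  exact ⟨fun h => by simpa using h.sub hsx, fun h => h.add hsx⟩

theorem summable_pi_prod (y : ℕ → ℝ) (hy : ∀ m, 0 ≤ y m) (hs : Summable y) (n : ℕ) :
    Summable (fun f : Fin n → ℕ => ∏ i, y (f i)) := by
  induction n with
  | zero => exact Summable.of_finite
  | succ n ih =>
    rw [← (Fin.consEquiv fun _ : Fin (n + 1) => ℕ).summable_iff]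
    have := hs.mul_of_nonneg ih hy fun f => Finset.prod_nonneg fun i _ => hy _
    refine this.congr fun p => ?_
    simp [Fin.consEquiv, Fin.prod_univ_succ]

/-- with `y_m = ∑_{j=m}^∞ x_j`, the total mass
`Z^{(ℓ)} = ∑_{λ ∈ Par_{∞,ℓ}} ∏_{i=1}^ℓ y_{λ_i}` is finite (the nonnegative family is
summable) if and only if `∑_{i=0}^∞ i·x_i < ∞`.  Elements of `Par_{∞,ℓ}` are encoded
as nonincreasing tuples `Fin ℓ → ℕ`. -/
theorem umjmc_mass_finite_iff (ℓ : ℕ) (hl : 1 ≤ ℓ) (x : ℕ → ℝ) (hx : ∀ i, 0 ≤ x i)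
    (hsx : Summable x) (hsum : ∑' i : ℕ, x i = 1) :
    Summable (fun lam : {f : Fin ℓ → ℕ // ∀ i j : Fin ℓ, i ≤ j → f j ≤ f i} =>
        ∏ i, ∑' j : ℕ, x (lam.1 i + j))
      ↔ Summable (fun i : ℕ => (i : ℝ) * x i) := by
  rw [← summable_tail_iff x hx hsx]
  obtain ⟨n, rfl⟩ := Nat.exists_eq_add_of_le' hl
  constructor
  · intro h
    -- the one-row partitions `(m, 0, …, 0)`
    let e : ℕ → {f : Fin (n + 1) → ℕ // ∀ i j : Fin (n + 1), i ≤ j → f j ≤ f i} := fun m =>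
      ⟨Fin.cons m fun _ => 0, fun i j hij => by
        induction j using Fin.cases with
        | zero => simp [Fin.le_zero_iff.1 hij]
        | succ j => simp⟩
    have he : Function.Injective e := fun a b hab => by
      simpa [e] using congrFun (congrArg Subtype.val hab) 0
    refine (h.comp_injective he).congr fun m => ?_
    simp [e, Fin.prod_univ_succ, hsum]
  · intro h
    exact (summable_pi_prod _ (fun m => tsum_nonneg fun j => hx _) h (n + 1)).comp_injective
      Subtype.val_injective
end

section
/- For the Infinite Multivariate Juggling Markov Chain, the measure w on the set Par of all integer partitions defined by w(λ) = ∏_{i=1}^{∞} y_{λ_i} (a finite product since λ_i = 0 eventually and y_0 = 1), where y_m = ∑_{j=m}^{∞} x_j, is invariant: for every λ ∈ Par, ∑_{μ ∈ Par} w(μ) P_{μ,λ} = w(λ). -/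
/-!
Fix a partition `λ`. The pairs `(μ, i)` with `μ^{(i)} = λ` are in bijection with the positions `n`
of `λ`: necessarily `i = λ_n`, and `μ` arises from `λ` by deleting the part `λ_n` and adding `1` to
each of the `n` parts before it (`imjIns_pre`, `eq_pre_of_imjIns_eq`). Hence the left-hand side is
`∑ₙ x_{λ_n} · ∏_{m<n} y_{λ_m+1} · ∏_{m>n} y_{λ_m}`. Since `x_k = y_k - y_{k+1}`, the `n`-th term is
`T_n - T_{n+1}`, where `T_n = ∏_{m<n} y_{λ_m+1} · ∏_{m≥n} y_{λ_m}`, so the sum telescopes to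
`T_0 - lim T_n`. Here `T_0` is the weight of `λ`, and `T_n → 0` because, once `λ` has reached its
zeros, each step multiplies `T_n` by `y_1 = 1 - x_0 < 1`.
-/


open Classical in
/-- `λ^{(i)}`: with `j` the smallest index with `λ_j ≤ i` (indices from 0 here),
decrement the first `j` parts, put the new part `i` at index `j`, and shift the rest.
This realizes `(λ₁−1,…,λ_{j−1}−1, i, λ_j, λ_{j+1}, …)`. -/
noncomputable def imjIns (i : ℕ) (lam : ℕ → ℕ) : ℕ → ℕ := fun n =>
  let j := sInf {m | lam m ≤ i}
  if n < j then lam n - 1 else if n = j then i else lam (n - 1)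

open Classical in
/-- Transition probability of the IMJMC on integer partitions (encoded as
nonincreasing eventually-zero functions `ℕ → ℕ`): `λ → λ^{(i)}` with probability
`x i`. -/
noncomputable def imjP (x : ℕ → ℝ) (lam mu : ℕ → ℕ) : ℝ :=
  ∑' i : ℕ, if mu = imjIns i lam then x i else 0

/-- The set `Par` of all integer partitions: nonincreasing, eventually zero
functions `ℕ → ℕ` (the value at `n` is the part `λ_{n+1}`). -/
def ParInf : Type :=
  {f : ℕ → ℕ // (∀ i j : ℕ, i ≤ j → f j ≤ f i) ∧ ∃ N, ∀ n, N ≤ n → f n = 0}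

/-- The tail sum `y_m = ∑_{j ≥ m} x_j`. -/
noncomputable def imjTail (x : ℕ → ℝ) (m : ℕ) : ℝ := ∑' j : ℕ, x (m + j)

lemma imjTail_succ {x : ℕ → ℝ} (hsx : Summable x) (m : ℕ) :
    imjTail x m = x m + imjTail x (m + 1) := by
  have h : Summable fun j => x (m + j) := by
    simpa only [add_comm m] using (summable_nat_add_iff m).2 hsx
  unfold imjTail
  rw [h.tsum_eq_zero_add]
  simp only [add_zero, add_assoc, add_comm 1]

lemma imjTail_nonneg {x : ℕ → ℝ} (hx : ∀ i, 0 ≤ x i) (m : ℕ) : 0 ≤ imjTail x m :=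
  tsum_nonneg fun _ => hx _

/-- The sequence obtained from `f` by deleting the entry at position `n` and adding `1` to every
entry before it. For a partition `f` it is the unique `μ` such that inserting `f n` into `μ` at
position `n` gives `f`. -/
def imjPre (f : ℕ → ℕ) (n : ℕ) : ℕ → ℕ := fun m => if m < n then f m + 1 else f (m + 1)

/-- `imjPre` as an operation on partitions. -/
def ParInf.pre (lam : ParInf) (n : ℕ) : ParInf :=
  ⟨imjPre lam.1 n, by
    intro i j hij
    have h1 := lam.2.1 i j hij
    have h2 := lam.2.1 i (j + 1) (by omega)
    have h3 := lam.2.1 (i + 1) (j + 1) (by omega)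
    unfold imjPre
    split_ifs <;> omega, by
    obtain ⟨N, hN⟩ := lam.2.2
    refine ⟨N + n, fun m hm => ?_⟩
    unfold imjPre
    rw [if_neg (by omega), hN _ (by omega)]⟩

/-- The part `λ_n` gets inserted at position `n` of `λ.pre n`. -/
lemma sInf_pre (lam : ParInf) (n : ℕ) : sInf {m | (lam.pre n).1 m ≤ lam.1 n} = n := by
  apply le_antisymm
  · apply Nat.sInf_le
    have := lam.2.1 n (n + 1) (by omega)
    simpa [ParInf.pre, imjPre] using this
  · apply le_csInf
    · refine ⟨n, ?_⟩
      have := lam.2.1 n (n + 1) (by omega)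
      simpa [ParInf.pre, imjPre] using this
    · intro m hm
      by_contra! hlt
      have := lam.2.1 m n hlt.le
      simp only [ParInf.pre, imjPre, Set.mem_ofPred_eq, if_pos hlt] at hm
      omega

lemma imjIns_pre (lam : ParInf) (n : ℕ) : imjIns (lam.1 n) (lam.pre n).1 = lam.1 := by
  funext m
  simp only [imjIns, sInf_pre]
  rcases lt_trichotomy m n with h | h | h
  · simp [ParInf.pre, imjPre, h]
  · simp [h]
  · rw [if_neg (by omega), if_neg (by omega)]
    simp only [ParInf.pre, imjPre]
    rw [if_neg (by omega), Nat.sub_add_cancel (by omega)]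

lemma eq_pre_of_imjIns_eq {lam mu : ParInf} {i : ℕ} (h : lam.1 = imjIns i mu.1) :
    ∃ n, (lam.pre n, lam.1 n) = (mu, i) := by
  set j := sInf {m | mu.1 m ≤ i} with hj
  have hval : ∀ m, lam.1 m = if m < j then mu.1 m - 1 else if m = j then i else mu.1 (m - 1) :=
    fun m => congrFun h m
  refine ⟨j, Prod.ext (Subtype.ext (funext fun m => ?_)) (by simp [hval])⟩
  simp only [ParInf.pre, imjPre]
  split_ifs with hm
  · -- parts before the insertion point exceed `i`, so the truncated subtraction is genuine
    have : ¬ mu.1 m ≤ i := fun hle =>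
      absurd (Nat.sInf_le (s := {m | mu.1 m ≤ i}) hle) (by omega)
    rw [hval, if_pos hm]
    omega
  · rw [hval, if_neg (by omega), if_neg (by omega), Nat.add_sub_cancel]

lemma pre_injective (lam : ParInf) :
    Function.Injective fun n : ℕ => (lam.pre n, lam.1 n) := by
  intro a b hab
  obtain ⟨h1, h2⟩ := Prod.mk.inj hab
  rw [← sInf_pre lam a, ← sInf_pre lam b, h1, h2]

/-- The weight `w` of the partition obtained from `λ` by deleting its first `n` parts. -/
noncomputable def imjRest (x : ℕ → ℝ) (lam : ParInf) (n : ℕ) : ℝ :=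
  ∏' m : ℕ, imjTail x (lam.1 (m + n))

lemma multipliable_shift {x : ℕ → ℝ} (h0 : imjTail x 0 = 1) (lam : ParInf) (n : ℕ) :
    Multipliable fun m : ℕ => imjTail x (lam.1 (m + n)) := by
  obtain ⟨N, hN⟩ := lam.2.2
  refine multipliable_of_ne_finset_one (s := Finset.range N) fun m hm => ?_
  rw [Finset.mem_range] at hm
  rw [hN _ (by omega), h0]

lemma imjRest_succ {x : ℕ → ℝ} (h0 : imjTail x 0 = 1) (lam : ParInf) (n : ℕ) :
    imjRest x lam n = imjTail x (lam.1 n) * imjRest x lam (n + 1) := by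
  have h : Multipliable fun m : ℕ => imjTail x (lam.1 (m + 1 + n)) := by
    simpa only [add_assoc, add_comm 1] using multipliable_shift h0 lam (n + 1)
  have := Multipliable.prod_mul_tprod_nat_mul' (k := 1)
    (f := fun m => imjTail x (lam.1 (m + n))) h
  simp only [Finset.prod_range_one, zero_add] at this
  unfold imjRest
  rw [← this]
  simp only [add_assoc, add_comm 1]

lemma weight_pre {x : ℕ → ℝ} (h0 : imjTail x 0 = 1) (lam : ParInf) (n : ℕ) :
    ∏' m : ℕ, imjTail x ((lam.pre n).1 m)
      = (∏ m ∈ Finset.range n, imjTail x (lam.1 m + 1)) * imjRest x lam (n + 1) := by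
  have hs : ∀ m, (lam.pre n).1 (m + n) = lam.1 (m + (n + 1)) := fun m => by
    simp [ParInf.pre, imjPre, add_assoc]
  have := Multipliable.prod_mul_tprod_nat_mul' (k := n)
    (f := fun m => imjTail x ((lam.pre n).1 m)) (multipliable_shift h0 (lam.pre n) n)
  rw [← this]
  simp only [hs]
  congr 1
  refine Finset.prod_congr rfl fun m hm => ?_
  simp [ParInf.pre, imjPre, Finset.mem_range.1 hm]

/-- The interpolating product `T_n = ∏_{m<n} y_{λ_m+1} · ∏_{m≥n} y_{λ_m}`. -/
noncomputable def imjT (x : ℕ → ℝ) (lam : ParInf) (n : ℕ) : ℝ :=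
  (∏ m ∈ Finset.range n, imjTail x (lam.1 m + 1)) * imjRest x lam n

lemma imjT_sub {x : ℕ → ℝ} (hsx : Summable x) (h0 : imjTail x 0 = 1) (lam : ParInf) (n : ℕ) :
    (∏' m : ℕ, imjTail x ((lam.pre n).1 m)) * x (lam.1 n)
      = imjT x lam n - imjT x lam (n + 1) := by
  rw [weight_pre h0, imjT, imjT, imjRest_succ h0 lam n, Finset.prod_range_succ,
    imjTail_succ hsx (lam.1 n)]
  ring

lemma imjT_tendsto {x : ℕ → ℝ} (hx : ∀ i, 0 ≤ x i) (hx0 : 0 < x 0) (hsx : Summable x)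
    (h0 : imjTail x 0 = 1) (lam : ParInf) :
    Filter.Tendsto (imjT x lam) Filter.atTop (nhds 0) := by
  obtain ⟨N, hN⟩ := lam.2.2
  have h1 : imjTail x 1 < 1 := by
    have := imjTail_succ hsx 0
    rw [zero_add] at this
    linarith
  rw [← Filter.tendsto_add_atTop_iff_nat N]
  have hT : ∀ k, imjT x lam (k + N)
      = (∏ m ∈ Finset.range N, imjTail x (lam.1 m + 1)) * imjTail x 1 ^ k := by
    intro k
    have hR : imjRest x lam (k + N) = 1 := by
      unfold imjRest
      rw [← tprod_one (β := ℕ)]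
      exact tprod_congr fun m => by rw [hN _ (by omega), h0]
    rw [imjT, hR, mul_one, add_comm k N, Finset.prod_range_add]
    congr 1
    rw [Finset.prod_congr rfl fun m _ => by rw [hN (N + m) (by omega)]]
    simp
  simp only [hT]
  simpa using (tendsto_pow_atTop_nhds_zero_of_lt_one (imjTail_nonneg hx 1) h1).const_mul
    (∏ m ∈ Finset.range N, imjTail x (lam.1 m + 1))

lemma weight_nonneg {x : ℕ → ℝ} (hx : ∀ i, 0 ≤ x i) (h0 : imjTail x 0 = 1) (mu : ParInf) :
    0 ≤ ∏' m : ℕ, imjTail x (mu.1 m) := by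
  obtain ⟨N, hN⟩ := mu.2.2
  rw [tprod_eq_prod (s := Finset.range N) fun m hm => by
    rw [Finset.mem_range] at hm
    rw [hN _ (by omega), h0]]
  exact Finset.prod_nonneg fun _ _ => imjTail_nonneg hx _

/-- The telescoping sum over all positions of `λ`. -/
lemma hasSum_pre {x : ℕ → ℝ} (hx : ∀ i, 0 ≤ x i) (hx0 : 0 < x 0) (hsx : Summable x)
    (h0 : imjTail x 0 = 1) (lam : ParInf) :
    HasSum (fun n => (∏' m : ℕ, imjTail x ((lam.pre n).1 m)) * x (lam.1 n))
      (∏' m : ℕ, imjTail x (lam.1 m)) := by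
  rw [hasSum_iff_tendsto_nat_of_nonneg fun n => mul_nonneg (weight_nonneg hx h0 _) (hx _)]
  simp only [imjT_sub hsx h0, Finset.sum_range_sub']
  have hT0 : imjT x lam 0 = ∏' m : ℕ, imjTail x (lam.1 m) := by simp [imjT, imjRest]
  simpa [hT0] using (imjT_tendsto hx hx0 hsx h0 lam).const_sub (imjT x lam 0)

/-- the measure `w(λ) = ∏_{i=1}^∞ y_{λ_i}`, `y_m = ∑_{j=m}^∞ x_j`
(the product has finitely many factors ≠ 1 since `λ_i = 0` eventually and `y_0 = 1`),
is invariant for the IMJMC: `∑_{μ ∈ Par} w(μ) P_{μ,λ} = w(λ)`. -/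
theorem imjmc_invariant (x : ℕ → ℝ) (hx : ∀ i, 0 ≤ x i) (hx0 : 0 < x 0)
    (hsx : Summable x) (hsum : ∑' i : ℕ, x i = 1) (lam : ParInf) :
    ∑' mu : ParInf,
      (∏' i : ℕ, ∑' j : ℕ, x (mu.1 i + j)) * imjP x mu.1 lam.1
      = ∏' i : ℕ, ∑' j : ℕ, x (lam.1 i + j) := by
  classical
  have h0 : imjTail x 0 = 1 := by simpa [imjTail] using hsum
  change ∑' mu : ParInf, (∏' i : ℕ, imjTail x (mu.1 i)) * imjP x mu.1 lam.1
    = ∏' i : ℕ, imjTail x (lam.1 i)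
  -- The summand over pairs `(μ, i)`; it is supported on the image of `n ↦ (λ.pre n, λ_n)`.
  let F : ParInf × ℕ → ℝ := fun p =>
    (∏' m : ℕ, imjTail x (p.1.1 m)) * if lam.1 = imjIns p.2 p.1.1 then x p.2 else 0
  have hF : HasSum F (∏' m : ℕ, imjTail x (lam.1 m)) := by
    rw [← (pre_injective lam).hasSum_iff]
    · convert hasSum_pre hx hx0 hsx h0 lam using 2 with n
      simp [F, imjIns_pre]
    · rintro ⟨mu, i⟩ hp
      have : ¬ lam.1 = imjIns i mu.1 := fun h => hp (eq_pre_of_imjIns_eq h)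
      simp [F, this]
  refine (hF.prod_fiberwise fun mu => ?_).tsum_eq
  have hs : Summable fun i => if lam.1 = imjIns i mu.1 then x i else 0 :=
    hsx.of_nonneg_of_le (fun i => by split_ifs <;> simp [hx])
      (fun i => by split_ifs <;> simp [hx])
  exact hs.hasSum.mul_left (∏' m : ℕ, imjTail x (mu.1 m))
end

section
/- For the multivariate add-drop model with a > 0 and z_1,…,z_h ≥ 0, the measure W on St_h defined for B = b_1⋯b_h with k occurrences of ∘ by W(B) = a^k · ∏_{i ∈ {1,…,h}, b_i = •} (z_1 + z_2 + ⋯ + z_{ψ_i(B)+1}) is invariant: ∑_{A ∈ St_h} W(A) P_{A,B} = W(B) for all B ∈ St_h; moreover its total mass is ∑_{B ∈ St_h} W(B) = ∑_{k=0}^{h} a^k · h_{h−k}(z_1, z_1+z_2, …, z_1+⋯+z_{k+1}), where h_m denotes the complete homogeneous symmetric polynomial of degree m. -/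
/-!
Reading words from the right, write `w_c = adWeightAux z a c` and let `v_c = z_1 + ⋯ + z_{c+1}`
be the factor of a `•` with `c` circles to its right.

*Invariance.* Summing `W` over the letter dropped at the left end of `A` multiplies the weight of
the remaining word `R` by `a + v_k = z_0 + ⋯ + z_{k+1}`, where `k` is the number of circles of `R`;
this cancels the normalisation of the transition probability
(`adWeightAux_append_singleton_add`). It remains to see that, for every nonempty word `C`,
`w_0(C) = ∑_R w_0(R) ∑_i z_i [C = S_i(R∘)]`. If `C` ends in `•`, only `i = 1` contributes and the
claim is `w_0(C'•) = z_1 w_0(C')`. If `C = C'∘`, the claim is the case `c = 0` of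
`a w_{c+1}(C') = a w_c(C') + ∑_R w_c(R) ∑_{i ≥ 1} z_{i+c+1} [C' = S_i(R)]`,
which holds for all `c` by induction on the length (`sum_adWeightAux_mul_fill`).

*Total mass.* The sum of `w_c` over words of length `n`, split according to the rightmost letter,
satisfies `T(c, n+1) = a T(c+1, n) + v_c T(c, n)`. The expression
`∑_k a^k h_{n-k}(v_c, …, v_{c+k})` satisfies the same recursion, by
`h_{m+1}(x_0, …, x_K) = x_0 h_m(x_0, …, x_K) + h_{m+1}(x_1, …, x_K)`.
-/

/-- Replace the `i`-th occurrence of `false` (i.e. `∘`), 1-indexed, reading from the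
left, by `true` (i.e. `•`); identity when `i = 0` or `i` exceeds the number of
occurrences of `false`. -/
def fillAtOne : ℕ → List Bool → List Bool
  | _, [] => []
  | i, true :: rest => true :: fillAtOne i rest
  | 0, false :: rest => false :: rest
  | 1, false :: rest => true :: rest
  | (i+2), false :: rest => false :: fillAtOne (i + 1) rest

/-- `S_i(A)`: replace the `i`-th occurrence of `∘` in `A`, counted from the right,
by `•` (identity if `i = 0` or `i` exceeds the number of `∘`'s in `A`). -/
def fillFromRight (i : ℕ) (A : List Bool) : List Bool :=
  (fillAtOne i A.reverse).reverse

/-- The complete homogeneous symmetric polynomial of degree `m` in the `k+1`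
variables `a 0, …, a k`:  `h_m(a_0,…,a_k) = ∑_{0 ≤ i_1 ≤ ⋯ ≤ i_m ≤ k} a_{i_1}⋯a_{i_m}`. -/
noncomputable def hsym (m k : ℕ) (a : ℕ → ℝ) : ℝ :=
  ∑ t ∈ (Finset.univ : Finset (Fin m → Fin (k + 1))).filter
      (fun t => ∀ i j : Fin m, i ≤ j → (t i : ℕ) ≤ (t j : ℕ)),
    ∏ i, a (t i)

/-- Transition probability of the multivariate add-drop model on `St_h` (with
`a = z 0`): from `A = a₁⋯a_h`, go to `S_i(a₂⋯a_h∘)` with probability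
`z_i/(z_0+⋯+z_k)` for `0 ≤ i ≤ k`, `k` the number of `∘`'s in `a₂⋯a_h∘`. -/
noncomputable def addDropP (z : ℕ → ℝ) : List Bool → List Bool → ℝ
  | [], B => if B = [] then 1 else 0
  | _ :: rest, B =>
      ∑ i ∈ Finset.range ((rest ++ [false]).count false + 1),
        if B = fillFromRight i (rest ++ [false]) then
          z i / ∑ j ∈ Finset.range ((rest ++ [false]).count false + 1), z j
        else 0

/-- Auxiliary weight, scanning the word from the right; `c` records the number of
`∘`'s seen so far, so each `∘` contributes a factor `a` and a `•` at position `i`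
contributes `z_1 + ⋯ + z_{ψ_i(B)+1}`. -/
noncomputable def adWeightAux (z : ℕ → ℝ) (a : ℝ) : ℕ → List Bool → ℝ
  | _, [] => 1
  | c, false :: rest => a * adWeightAux z a (c + 1) rest
  | c, true :: rest => (∑ j ∈ Finset.Icc 1 (c + 1), z j) * adWeightAux z a c rest

/-- `W(B) = a^k ∏_{i : b_i = •} (z_1 + ⋯ + z_{ψ_i(B)+1})` where `k` is the number of
`∘`'s of `B` and `ψ_i(B) = #{j : i < j ≤ h, b_j = ∘}`. -/
noncomputable def adWeight (z : ℕ → ℝ) (a : ℝ) (B : List Bool) : ℝ :=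
  adWeightAux z a 0 B.reverse

/-! ### Complete homogeneous symmetric polynomials -/

/-- The complete homogeneous symmetric polynomial of degree `m` in the `K` variables
`a 0, …, a (K-1)`. Unlike in `hsym`, the set of variables may be empty, which makes the
recursion on the number of variables uniform. -/
noncomputable def hsymVars (m K : ℕ) (a : ℕ → ℝ) : ℝ :=
  ∑ t ∈ (Finset.univ : Finset (Fin m → Fin K)).filter
      (fun t => ∀ i j : Fin m, i ≤ j → (t i : ℕ) ≤ (t j : ℕ)),
    ∏ i, a (t i)

lemma hsym_eq_hsymVars (m k : ℕ) (a : ℕ → ℝ) : hsym m k a = hsymVars m (k + 1) a := rfl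

lemma hsymVars_zero (K : ℕ) (a : ℕ → ℝ) : hsymVars 0 K a = 1 := by
  simp [hsymVars]

lemma hsymVars_succ_zero (m : ℕ) (a : ℕ → ℝ) : hsymVars (m + 1) 0 a = 0 := by
  simp [hsymVars]

/-- A weakly increasing tuple either starts with `0`, followed by any weakly increasing tuple, or
has all its entries positive. -/
lemma hsymVars_succ_succ (m K : ℕ) (a : ℕ → ℝ) :
    hsymVars (m + 1) (K + 1) a
      = a 0 * hsymVars m (K + 1) a + hsymVars (m + 1) K (fun i => a (i + 1)) := by
  unfold hsymVars
  rw [← Finset.sum_filter_add_sum_filter_not _ (fun t : Fin (m + 1) → Fin (K + 1) => t 0 = 0)]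
  congr 1
  · rw [Finset.mul_sum]
    symm
    refine Finset.sum_bij (fun t _ => (Fin.cons 0 t : Fin (m + 1) → Fin (K + 1))) ?_ ?_ ?_ ?_
    · intro t ht
      simp only [Finset.mem_filter, Finset.mem_univ, true_and] at ht ⊢
      refine ⟨fun i j hij => ?_, by simp⟩
      induction i using Fin.cases with
      | zero => simp
      | succ i =>
        induction j using Fin.cases with
        | zero => simp at hij
        | succ j => simpa using ht i j (by simpa using hij)
    · intro s _ t _ hst
      exact (Fin.cons_injective2 hst).2
    · intro t ht
      simp only [Finset.mem_filter, Finset.mem_univ, true_and] at ht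
      refine ⟨Fin.tail t, ?_, ?_⟩
      · simp only [Finset.mem_filter, Finset.mem_univ, true_and]
        intro i j hij
        exact ht.1 i.succ j.succ (by simpa using hij)
      · rw [← ht.2]
        exact Fin.cons_self_tail t
    · intro t _
      simp [Fin.prod_univ_succ]
  · symm
    refine Finset.sum_bij (fun t _ => fun i => (t i).succ) ?_ ?_ ?_ ?_
    · intro t ht
      simp only [Finset.mem_filter, Finset.mem_univ, true_and] at ht ⊢
      exact ⟨fun i j hij => by simpa using ht i j hij, Fin.succ_ne_zero _⟩
    · intro s _ t _ hst
      funext i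
      exact Fin.succ_injective _ (congrFun hst i)
    · intro t ht
      simp only [Finset.mem_filter, Finset.mem_univ, true_and] at ht
      have hne : ∀ i, t i ≠ 0 := by
        intro i hi
        have h0 := ht.1 0 i (Fin.zero_le i)
        rw [hi] at h0
        exact ht.2 (Fin.ext (by simpa using h0))
      refine ⟨fun i => (t i).pred (hne i), ?_, ?_⟩
      · simp only [Finset.mem_filter, Finset.mem_univ, true_and]
        intro i j hij
        have := ht.1 i j hij
        simp only [Fin.val_pred]
        omega
      · funext i
        simp
    · intro t _
      simp

/-! ### Sums over words -/

lemma sum_word_succ (n : ℕ) (f : List Bool → ℝ) :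
    ∑ A : Fin (n + 1) → Bool, f (List.ofFn A)
      = ∑ A : Fin n → Bool, f (true :: List.ofFn A)
        + ∑ A : Fin n → Bool, f (false :: List.ofFn A) := by
  rw [← (Fin.consEquiv fun _ : Fin (n + 1) => Bool).sum_comp, Fintype.sum_prod_type]
  simp [Fin.consEquiv, List.ofFn_succ]

lemma sum_word_reverse (n : ℕ) (f : List Bool → ℝ) :
    ∑ A : Fin n → Bool, f (List.ofFn A).reverse = ∑ A : Fin n → Bool, f (List.ofFn A) := by
  rw [← (Equiv.arrowCongr (Fin.revPerm (n := n)) (Equiv.refl Bool)).sum_comp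
    (fun A => f (List.ofFn A))]
  refine Finset.sum_congr rfl fun A _ => ?_
  congr 1
  refine List.ext_get (by simp) fun i hi _ => ?_
  simp only [List.length_reverse, List.length_ofFn] at hi
  simp only [List.get_eq_getElem, List.getElem_reverse, List.getElem_ofFn, List.length_ofFn,
    Equiv.arrowCongr_apply, Equiv.coe_refl, Fin.revPerm_symm, Function.comp_apply,
    Fin.revPerm_apply, id_eq]
  congr 1
  ext
  simp only [Fin.val_rev]
  omega

lemma sum_word_ite_eq (n : ℕ) (C : List Bool) (hC : C.length = n) (f : List Bool → ℝ) :
    ∑ A : Fin n → Bool, (if C = List.ofFn A then f (List.ofFn A) else 0) = f C := by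
  subst hC
  rw [Finset.sum_eq_single (fun i => C.get i)]
  · simp
  · intro A _ hA
    rw [if_neg]
    intro h
    apply hA
    apply List.ofFn_injective
    rw [← h]
    simp
  · simp

/-! ### Total mass -/

/-- The total weight of the words of length `n`, started with `c` circles already seen. -/
lemma sum_adWeightAux (z : ℕ → ℝ) (a : ℝ) (n : ℕ) : ∀ c : ℕ,
    ∑ B : Fin n → Bool, adWeightAux z a c (List.ofFn B)
      = ∑ k ∈ Finset.range (n + 1),
          a ^ k * hsymVars (n - k) (k + 1) (fun i => ∑ j ∈ Finset.Icc 1 (c + i + 1), z j) := by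
  induction n with
  | zero => intro c; simp [adWeightAux, hsymVars_zero]
  | succ n ih =>
    intro c
    rw [sum_word_succ]
    simp only [adWeightAux]
    rw [← Finset.mul_sum, ← Finset.mul_sum, ih c, ih (c + 1)]
    set V : ℕ → ℝ := fun i => ∑ j ∈ Finset.Icc 1 (c + i + 1), z j with hV
    have hV1 : (fun i => ∑ j ∈ Finset.Icc 1 (c + 1 + i + 1), z j) = fun i => V (i + 1) := by
      funext i
      simp only [hV]
      rw [show c + 1 + i + 1 = c + (i + 1) + 1 by ring]
    have hV0 : ∑ j ∈ Finset.Icc 1 (c + 1), z j = V 0 := rfl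
    rw [hV1, hV0]
    have hrec : ∀ k ∈ Finset.range (n + 1), a ^ k * hsymVars (n + 1 - k) (k + 1) V
        = V 0 * (a ^ k * hsymVars (n - k) (k + 1) V)
          + a ^ k * hsymVars (n + 1 - k) k (fun i => V (i + 1)) := by
      intro k hk
      rw [Nat.succ_sub (Nat.lt_succ_iff.mp (Finset.mem_range.mp hk)), hsymVars_succ_succ]
      ring
    rw [Finset.sum_range_succ _ (n + 1), Finset.sum_congr rfl hrec, Finset.sum_add_distrib,
      ← Finset.mul_sum, add_assoc]
    congr 1
    -- The top term `k = n + 1` has degree `0`, so one of its variables may be dropped.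
    have htop : hsymVars (n + 1 - (n + 1)) (n + 1 + 1) V
        = hsymVars (n + 1 - (n + 1)) (n + 1) (fun i => V (i + 1)) := by
      simp [hsymVars_zero]
    rw [htop, ← Finset.sum_range_succ
      (fun k => a ^ k * hsymVars (n + 1 - k) k (fun i => V (i + 1))),
      Finset.sum_range_succ' _ (n + 1)]
    rw [Nat.sub_zero, hsymVars_succ_zero, mul_zero, add_zero, Finset.mul_sum]
    refine Finset.sum_congr rfl fun k _ => ?_
    rw [Nat.add_sub_add_right]
    ring

/-! ### Invariance -/

/-- Summing over the leftmost letter: the two weights add up to the normalising constant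
of the transition probabilities. -/
lemma adWeightAux_append_singleton_add (z : ℕ → ℝ) (a : ℝ) (R : List Bool) : ∀ c : ℕ,
    adWeightAux z a c (R ++ [true]) + adWeightAux z a c (R ++ [false])
      = adWeightAux z a c R * (a + ∑ j ∈ Finset.Icc 1 (c + R.count false + 1), z j) := by
  induction R with
  | nil => intro c; simp [adWeightAux]; ring
  | cons b R ih =>
    intro c
    cases b
    · have h := ih (c + 1)
      simp only [List.cons_append, adWeightAux, List.count_cons_self]
      rw [← mul_add, h, show c + (R.count false + 1) = c + 1 + R.count false by ring]
      ring
    · have h := ih c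
      simp only [List.cons_append, adWeightAux]
      rw [← mul_add, h]
      simp
      ring

/-- How the weight changes when the number of circles already seen is raised by one: `a` times
the difference is the total contribution of the words `R` from which `C` arises by filling a
circle. For `c = 0` the index shift `i + 2` comes from the final `∘` of the word `R∘`, which is
circle number `1`. -/
lemma sum_adWeightAux_mul_fill (z : ℕ → ℝ) (a : ℝ) (n : ℕ) :
    ∀ (c : ℕ) (C : List Bool), C.length = n →
      ∑ R : Fin n → Bool, adWeightAux z a c (List.ofFn R) *
          ∑ i ∈ Finset.range ((List.ofFn R).count false),
            (if C = fillAtOne (i + 1) (List.ofFn R) then z (i + c + 2) else 0)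
        = a * adWeightAux z a (c + 1) C - a * adWeightAux z a c C := by
  induction n with
  | zero =>
    intro c C hC
    obtain rfl := List.length_eq_zero_iff.mp hC
    simp [adWeightAux]
  | succ n ih =>
    intro c C hC
    rw [sum_word_succ n (fun R => adWeightAux z a c R *
          ∑ i ∈ Finset.range (R.count false),
            (if C = fillAtOne (i + 1) R then z (i + c + 2) else 0))]
    cases C with
    | nil => simp at hC
    | cons b C =>
      have hC' : C.length = n := by simpa using hC
      cases b
      · simp only [adWeightAux, fillAtOne, List.count_cons_self, Finset.sum_range_succ']
        have h := ih (c + 1) C hC'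
        simp only [List.cons.injEq, Bool.false_eq_true, false_and, if_false, true_and,
          Finset.sum_const_zero, mul_zero, zero_add, add_zero]
        rw [← mul_sub, ← h, Finset.mul_sum]
        refine Finset.sum_congr rfl fun R _ => ?_
        rw [mul_assoc]
        simp only [show ∀ i, i + 1 + c + 2 = i + (c + 1) + 2 from fun i => by ring]
      · simp only [adWeightAux, fillAtOne, List.count_cons_self, Finset.sum_range_succ']
        have h := ih c C hC'
        have h1 := sum_word_ite_eq n C hC'
          (fun R => a * adWeightAux z a (c + 1) R * z (c + 2))
        simp only [List.cons.injEq, Bool.true_eq_false, false_and, if_false, true_and,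
          Finset.sum_const_zero, zero_add, mul_ite, mul_zero]
        rw [h1, Finset.sum_Icc_succ_top (by omega : 1 ≤ c + 1 + 1)]
        simp only [List.count_cons_of_ne (show true ≠ false by decide), mul_assoc]
        rw [← Finset.mul_sum, h]
        ring

/-- Invariance after the normalising constants have been cancelled, for reversed words. -/
lemma sum_adWeightAux_mul_step (z : ℕ → ℝ) (n : ℕ) (C : List Bool) (hC : C.length = n + 1) :
    ∑ R : Fin n → Bool, adWeightAux z (z 0) 0 (List.ofFn R) *
        ∑ i ∈ Finset.range ((List.ofFn R).count false + 2),
          (if C = fillAtOne i (false :: List.ofFn R) then z i else 0)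
      = adWeightAux z (z 0) 0 C := by
  cases C with
  | nil => simp at hC
  | cons b C =>
    have hC' : C.length = n := by simpa using hC
    simp only [Finset.sum_range_succ' _ (_ + 1), Finset.sum_range_succ' _ (List.count _ _),
      fillAtOne, mul_add, Finset.sum_add_distrib]
    cases b
    · have h := sum_adWeightAux_mul_fill z (z 0) n 0 C hC'
      have h1 := sum_word_ite_eq n C hC' (fun R => adWeightAux z (z 0) 0 R * z 0)
      simp only [List.cons.injEq, Bool.false_eq_true, false_and, if_false, true_and,
        mul_zero, Finset.sum_const_zero, add_zero, adWeightAux, zero_add] at h ⊢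
      rw [h]
      simp only [mul_ite, mul_zero]
      rw [h1]
      ring
    · have h1 := sum_word_ite_eq n C hC' (fun R => adWeightAux z (z 0) 0 R * z 1)
      simp only [List.cons.injEq, Bool.true_eq_false, false_and, if_false, true_and,
        mul_zero, Finset.sum_const_zero, add_zero, zero_add, adWeightAux, mul_ite,
        Finset.Icc_self, Finset.sum_singleton]
      rw [h1]
      ring

/-- Summing over the dropped letter, the numerator of the transition probability is all
that is left. -/
lemma adWeight_mul_addDropP_add (z : ℕ → ℝ) (R B : List Bool)
    (hS : ∑ j ∈ Finset.range (R.count false + 2), z j ≠ 0) :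
    adWeight z (z 0) (true :: R) * addDropP z (true :: R) B
        + adWeight z (z 0) (false :: R) * addDropP z (false :: R) B
      = adWeightAux z (z 0) 0 R.reverse *
          ∑ i ∈ Finset.range (R.reverse.count false + 2),
            (if B.reverse = fillAtOne i (false :: R.reverse) then z i else 0) := by
  have hcount : (R ++ [false]).count false + 1 = R.count false + 2 := by simp
  have hZ : z 0 + ∑ j ∈ Finset.Icc 1 (R.count false + 1), z j
      = ∑ j ∈ Finset.range (R.count false + 2), z j := by
    rw [Finset.range_eq_Ico, Finset.sum_eq_sum_Ico_succ_bot (by omega)]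
    rfl
  have hfill : ∀ i, B = fillFromRight i (R ++ [false])
      ↔ B.reverse = fillAtOne i (false :: R.reverse) := by
    intro i
    rw [fillFromRight, List.reverse_append, ← List.reverse_eq_iff]
    rfl
  simp only [addDropP, adWeight, List.reverse_cons, hcount, hfill, List.count_reverse]
  rw [← add_mul, adWeightAux_append_singleton_add]
  rw [List.count_reverse, zero_add, hZ, mul_assoc, Finset.mul_sum]
  congr 1
  refine Finset.sum_congr rfl fun i _ => ?_
  split_ifs
  · rw [mul_div_cancel₀ _ hS]
  · simp

/-- the measure `W` is invariant for the add-drop model, with total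
mass `∑_{k=0}^h a^k h_{h−k}(z_1, z_1+z_2, …, z_1+⋯+z_{k+1})` (where `a = z 0 > 0`). -/
theorem adddrop_invariant (h : ℕ) (z : ℕ → ℝ)
    (ha : 0 < z 0) (hz : ∀ i, 1 ≤ i → i ≤ h → 0 ≤ z i) :
    (∀ B : Fin h → Bool,
        ∑ A : Fin h → Bool,
            adWeight z (z 0) (List.ofFn A) * addDropP z (List.ofFn A) (List.ofFn B)
          = adWeight z (z 0) (List.ofFn B)) ∧
      ∑ B : Fin h → Bool, adWeight z (z 0) (List.ofFn B)
        = ∑ k ∈ Finset.range (h + 1),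
            (z 0) ^ k * hsym (h - k) k (fun i => ∑ j ∈ Finset.Icc 1 (i + 1), z j) := by
  constructor
  · intro B
    cases h with
    | zero => simp [addDropP]
    | succ n =>
      rw [sum_word_succ n (fun A => adWeight z (z 0) A * addDropP z A (List.ofFn B)),
        ← Finset.sum_add_distrib]
      have hpos : ∀ R : Fin n → Bool,
          ∑ j ∈ Finset.range ((List.ofFn R).count false + 2), z j ≠ 0 := by
        intro R
        have hle : (List.ofFn R).count false ≤ n := by
          simpa using List.count_le_length (a := false) (l := List.ofFn R)
        rw [Finset.sum_range_succ']
        have : 0 ≤ ∑ j ∈ Finset.range ((List.ofFn R).count false + 1), z (j + 1) :=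
          Finset.sum_nonneg fun j hj => hz _ (by omega) (by
            have := Finset.mem_range.mp hj
            omega)
        positivity
      simp only [adWeight_mul_addDropP_add z _ _ (hpos _)]
      rw [sum_word_reverse n (fun R => adWeightAux z (z 0) 0 R *
          ∑ i ∈ Finset.range (R.count false + 2),
            (if (List.ofFn B).reverse = fillAtOne i (false :: R) then z i else 0)),
        sum_adWeightAux_mul_step z n _ (by simp)]
      rfl
  · simp only [adWeight]
    rw [sum_word_reverse h (fun B => adWeightAux z (z 0) 0 B), sum_adWeightAux]
    simp only [hsym_eq_hsymVars, zero_add]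
end

section
/- For the multivariate annihilation model with nonnegative reals z_1,…,z_h, a satisfying z_1+⋯+z_h+a = 1, the probability distribution Π on St_h defined for B = b_1⋯b_h with k occurrences of ∘ by Π(B) = ∏_{i ∈ {1,…,h}, b_i = •} (z_1 + ⋯ + z_{ψ_i(B)+1}) · ∏_{j=1}^{k} (z_{j+1} + ⋯ + z_h + a) is stationary: ∑_{A ∈ St_h} Π(A) P_{A,B} = Π(B) for all B ∈ St_h, and ∑_{B ∈ St_h} Π(B) = 1. -/
/-- Transition probability of the multivariate annihilation model on `St_h`: from
`A = a₁⋯a_h`, go to `S_i(a₂⋯a_h∘)` with probability `z_i` for `1 ≤ i ≤ k`, and to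
`a₂⋯a_h∘` with probability `z_{k+1}+⋯+z_h+a`, `k` the number of `∘`'s in `a₂⋯a_h∘`. -/
noncomputable def annP (h : ℕ) (z : ℕ → ℝ) (a : ℝ) : List Bool → List Bool → ℝ
  | [], B => if B = [] then 1 else 0
  | _ :: rest, B =>
      (if B = rest ++ [false] then
          (∑ j ∈ Finset.Icc ((rest ++ [false]).count false + 1) h, z j) + a
        else 0)
        + ∑ i ∈ Finset.Icc 1 ((rest ++ [false]).count false),
            if B = fillFromRight i (rest ++ [false]) then z i else 0

/-- Auxiliary weight, scanning the word from the right; `c` records the number of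
`∘`'s seen so far: the `(c+1)`-th `∘` from the right contributes
`z_{c+2} + ⋯ + z_h + a` and a `•` at position `i` contributes
`z_1 + ⋯ + z_{ψ_i(B)+1}`. -/
noncomputable def annWeightAux (h : ℕ) (z : ℕ → ℝ) (a : ℝ) : ℕ → List Bool → ℝ
  | _, [] => 1
  | c, false :: rest =>
      ((∑ m ∈ Finset.Icc (c + 2) h, z m) + a) * annWeightAux h z a (c + 1) rest
  | c, true :: rest =>
      (∑ j ∈ Finset.Icc 1 (c + 1), z j) * annWeightAux h z a c rest

/-- `Π(B) = ∏_{i : b_i = •} (z_1 + ⋯ + z_{ψ_i(B)+1}) ∏_{j=1}^{k} (z_{j+1}+⋯+z_h+a)`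
where `k` is the number of `∘`'s of `B` and `ψ_i(B) = #{j : i < j ≤ h, b_j = ∘}`. -/
noncomputable def annWeight (h : ℕ) (z : ℕ → ℝ) (a : ℝ) (B : List Bool) : ℝ :=
  annWeightAux h z a 0 B.reverse

/-- The sum of `f` over all words of length `n`, by recursion on the first letter. -/
noncomputable def wordSum : ℕ → (List Bool → ℝ) → ℝ
  | 0, f => f []
  | n + 1, f => wordSum n (fun L => f (true :: L)) + wordSum n (fun L => f (false :: L))

theorem sum_ofFn_eq_wordSum (n : ℕ) (f : List Bool → ℝ) :
    ∑ v : Fin n → Bool, f (List.ofFn v) = wordSum n f := by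
  induction n generalizing f with
  | zero => simp [wordSum]
  | succ n ih =>
    rw [← (Fin.consEquiv (fun _ : Fin (n + 1) => Bool)).sum_comp, Fintype.sum_prod_type]
    simp [Fin.consEquiv, List.ofFn_succ, wordSum, ← ih]

theorem wordSum_congr (n : ℕ) (f g : List Bool → ℝ)
    (hfg : ∀ L : List Bool, L.length = n → f L = g L) : wordSum n f = wordSum n g := by
  induction n generalizing f g with
  | zero => exact hfg [] rfl
  | succ n ih =>
    simp only [wordSum]
    rw [ih _ (fun L => g (true :: L)) (fun L hL => hfg _ (by simp [hL])),
      ih _ (fun L => g (false :: L)) (fun L hL => hfg _ (by simp [hL]))]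

theorem wordSum_add (n : ℕ) (f g : List Bool → ℝ) :
    wordSum n (fun L => f L + g L) = wordSum n f + wordSum n g := by
  induction n generalizing f g with
  | zero => rfl
  | succ n ih => simp only [wordSum, ih]; ring

theorem wordSum_mul (n : ℕ) (r : ℝ) (f : List Bool → ℝ) :
    wordSum n (fun L => r * f L) = r * wordSum n f := by
  induction n generalizing f with
  | zero => rfl
  | succ n ih => simp only [wordSum, ih]; ring

theorem wordSum_zero (n : ℕ) : wordSum n (fun _ => 0) = 0 := by
  simpa using wordSum_mul n 0 (fun _ => 0)

theorem wordSum_snoc (n : ℕ) (f : List Bool → ℝ) :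
    wordSum (n + 1) f =
      wordSum n (fun L => f (L ++ [true])) + wordSum n (fun L => f (L ++ [false])) := by
  induction n generalizing f with
  | zero => rfl
  | succ n ih =>
    rw [wordSum, ih, ih]
    simp only [wordSum, List.cons_append]
    ring

theorem wordSum_reverse (n : ℕ) (f : List Bool → ℝ) :
    wordSum n (fun L => f L.reverse) = wordSum n f := by
  induction n generalizing f with
  | zero => rfl
  | succ n ih =>
    rw [wordSum_snoc, wordSum]
    simp only [List.reverse_append, List.reverse_cons, List.reverse_nil, List.nil_append,
      List.cons_append]
    rw [ih (fun L => f (true :: L)), ih (fun L => f (false :: L))]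

theorem wordSum_ite_eq (R : List Bool) (g : List Bool → ℝ) :
    wordSum R.length (fun L => if R = L then g L else 0) = g R := by
  induction R generalizing g with
  | nil => simp [wordSum]
  | cons x R ih =>
    cases x <;> simp [wordSum, wordSum_zero, ih (fun L => g (_ :: L))]

/-- If at most `h` letters are scanned in total, the two possible factors of the last letter of a
word sum to one. -/
theorem annWeightAux_snoc (h : ℕ) (z : ℕ → ℝ) (a : ℝ)
    (hsum : (∑ i ∈ Finset.Icc 1 h, z i) + a = 1) (L : List Bool) (c : ℕ)
    (hc : c + L.length + 1 ≤ h) :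
    annWeightAux h z a c (L ++ [true]) + annWeightAux h z a c (L ++ [false])
      = annWeightAux h z a c L := by
  induction L generalizing c with
  | nil =>
    have e : ∑ i ∈ Finset.Icc 1 h, z i
        = ∑ i ∈ Finset.Icc 1 (c + 1), z i + ∑ i ∈ Finset.Icc (c + 2) h, z i := by
      rw [← Finset.sum_union]
      · congr 1
        ext i
        simp only [List.length_nil] at hc
        simp only [Finset.mem_union, Finset.mem_Icc]
        omega
      · rw [Finset.disjoint_left]
        intro i
        simp only [Finset.mem_Icc]
        omega
    simp only [List.nil_append, annWeightAux]
    linarith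
  | cons x L ih =>
    simp only [List.length_cons] at hc
    cases x
    · simp only [List.cons_append, annWeightAux]
      rw [← mul_add, ih _ (by omega)]
    · simp only [List.cons_append, annWeightAux]
      rw [← mul_add, ih _ (by omega)]

theorem wordSum_annWeightAux (h : ℕ) (z : ℕ → ℝ) (a : ℝ)
    (hsum : (∑ i ∈ Finset.Icc 1 h, z i) + a = 1) (n : ℕ) (hn : n ≤ h) :
    wordSum n (annWeightAux h z a 0) = 1 := by
  induction n with
  | zero => rfl
  | succ n ih =>
    rw [wordSum_snoc, ← wordSum_add, ← ih (by omega)]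
    exact wordSum_congr _ _ _ fun L hL => annWeightAux_snoc h z a hsum L 0 (by omega)

/-- The probability of passing from the reversed word `L` to the reversed word `R` by filling the
`i`-th `∘` of `L`, `i ≥ 1`, with probability `z_{d+i}`, and none of them with the remaining
probability `z_{d+k+1} + ⋯ + z_h + a`, where `k` is the number of `∘`'s in `L`. The sum is indexed
by `i - 1`. -/
noncomputable def fillKernel (h : ℕ) (z : ℕ → ℝ) (a : ℝ) (d : ℕ) (L R : List Bool) : ℝ :=
  (if R = L then (∑ j ∈ Finset.Icc (d + L.count false + 1) h, z j) + a else 0)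
    + ∑ i ∈ Finset.range (L.count false), if R = fillAtOne (i + 1) L then z (d + i + 1) else 0

theorem fillKernel_true_true (h : ℕ) (z : ℕ → ℝ) (a : ℝ) (d : ℕ) (L R : List Bool) :
    fillKernel h z a d (true :: L) (true :: R) = fillKernel h z a d L R := by
  simp [fillKernel, fillAtOne]

theorem fillKernel_true_false (h : ℕ) (z : ℕ → ℝ) (a : ℝ) (d : ℕ) (L R : List Bool) :
    fillKernel h z a d (true :: L) (false :: R) = 0 := by
  simp [fillKernel, fillAtOne]

theorem fillKernel_false_true (h : ℕ) (z : ℕ → ℝ) (a : ℝ) (d : ℕ) (L R : List Bool) :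
    fillKernel h z a d (false :: L) (true :: R) = if R = L then z (d + 1) else 0 := by
  simp [fillKernel, fillAtOne, Finset.sum_range_succ']

theorem fillKernel_false_false (h : ℕ) (z : ℕ → ℝ) (a : ℝ) (d : ℕ) (L R : List Bool) :
    fillKernel h z a d (false :: L) (false :: R) = fillKernel h z a (d + 1) L R := by
  simp [fillKernel, fillAtOne, Finset.sum_range_succ', add_assoc, add_comm, add_left_comm]

/-- Filling a `∘` with parameters shifted by `c + 1` maps the weight started at `c` to a multiple
of the weight started at `c + 1`; the multiplier is the factor of the `(c + 1)`-th `∘`. -/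
theorem wordSum_fillKernel (h : ℕ) (z : ℕ → ℝ) (a : ℝ) (R : List Bool) (c : ℕ) :
    wordSum R.length (fun L => annWeightAux h z a c L * fillKernel h z a (c + 1) L R)
      = ((∑ m ∈ Finset.Icc (c + 2) h, z m) + a) * annWeightAux h z a (c + 1) R := by
  induction R generalizing c with
  | nil => simp [wordSum, annWeightAux, fillKernel]
  | cons x R ih =>
    cases x
    · simp only [List.length_cons, wordSum, fillKernel_true_false, fillKernel_false_false,
        mul_zero, wordSum_zero, zero_add, annWeightAux, mul_assoc, wordSum_mul, ih]
    · simp only [List.length_cons, wordSum, fillKernel_true_true, fillKernel_false_true,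
        annWeightAux, mul_assoc, wordSum_mul, ih, mul_ite, mul_zero]
      rw [wordSum_ite_eq R (fun L => ((∑ m ∈ Finset.Icc (c + 2) h, z m) + a) *
          (annWeightAux h z a (c + 1) L * z (c + 1 + 1))),
        Finset.sum_Icc_succ_top (b := c + 1) (by omega)]
      ring

/-- Stationarity once the deleted letter has been summed out: the word is prefixed with `∘` and
then filled. -/
theorem wordSum_fillKernel_cons (h : ℕ) (z : ℕ → ℝ) (a : ℝ) (n : ℕ) (R : List Bool)
    (hR : R.length = n + 1) :
    wordSum n (fun L => annWeightAux h z a 0 L * fillKernel h z a 0 (false :: L) R)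
      = annWeightAux h z a 0 R := by
  match R, hR with
  | true :: R, hR =>
    obtain rfl : R.length = n := by simpa using hR
    simp only [fillKernel_false_true, mul_ite, mul_zero]
    rw [wordSum_ite_eq R (fun L => annWeightAux h z a 0 L * z (0 + 1))]
    simp [annWeightAux, mul_comm]
  | false :: R, hR =>
    obtain rfl : R.length = n := by simpa using hR
    simp only [fillKernel_false_false]
    rw [wordSum_fillKernel]
    rfl

/-- The transition probabilities do not depend on the deleted letter, and on reversed words they
are those of the unshifted filling kernel applied to the word prefixed with `∘`. -/
theorem annP_cons_reverse (h : ℕ) (z : ℕ → ℝ) (a : ℝ) (x : Bool) (L B : List Bool) :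
    annP h z a (x :: L.reverse) B = fillKernel h z a 0 (false :: L) B.reverse := by
  have e : L.reverse ++ [false] = (false :: L).reverse := by simp
  simp only [annP, e, fillFromRight, List.reverse_reverse, List.count_reverse, fillKernel,
    ← List.reverse_eq_iff, Nat.zero_add]
  congr 1
  rw [Finset.range_eq_Ico, Finset.sum_Ico_add'
    (fun i => if B.reverse = fillAtOne i (false :: L) then z i else 0)]
  rfl

/-- `Π` is a stationary probability distribution of the
annihilation model. -/
theorem annihilation_stationary (h : ℕ) (z : ℕ → ℝ) (a : ℝ)
    (hz : ∀ i, 1 ≤ i → i ≤ h → 0 ≤ z i) (ha : 0 ≤ a)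
    (hsum : (∑ i ∈ Finset.Icc 1 h, z i) + a = 1) :
    (∀ B : Fin h → Bool,
        ∑ A : Fin h → Bool,
            annWeight h z a (List.ofFn A) * annP h z a (List.ofFn A) (List.ofFn B)
          = annWeight h z a (List.ofFn B)) ∧
      ∑ B : Fin h → Bool, annWeight h z a (List.ofFn B) = 1 := by
  refine ⟨fun B => ?_, ?_⟩
  · rw [sum_ofFn_eq_wordSum h fun A => annWeight h z a A * annP h z a A (List.ofFn B)]
    cases h with
    | zero => simp [wordSum, annWeight, annWeightAux, annP]
    | succ n =>
      rw [annWeight, ← wordSum_fillKernel_cons (n + 1) z a n _ (by simp), wordSum,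
        ← wordSum_add, ← wordSum_reverse]
      refine wordSum_congr _ _ _ fun L hL => ?_
      rw [annP_cons_reverse, annP_cons_reverse, ← add_mul, annWeight, annWeight,
        List.reverse_cons, List.reverse_cons, List.reverse_reverse,
        annWeightAux_snoc (n + 1) z a hsum L 0 (by omega)]
  · rw [sum_ofFn_eq_wordSum h (annWeight h z a), ← wordSum_annWeightAux h z a hsum h le_rfl,
      ← wordSum_reverse]
    simp [annWeight]
end

section
/- For the multivariate annihilation model with nonnegative reals z_1,…,z_h, a satisfying z_1+⋯+z_h+a = 1, the distribution after h steps is the stationary distribution regardless of the initial state: for all A, B ∈ St_h, the (A,B) entry of the h-th power of the transition matrix P equals Π(B), where Π(B) = ∏_{i ∈ {1,…,h}, b_i = •} (z_1 + ⋯ + z_{ψ_i(B)+1}) · ∏_{j=1}^{k} (z_{j+1} + ⋯ + z_h + a) for B = b_1⋯b_h with k occurrences of ∘. Consequently, for any probability distribution η on St_h, η P^h = Π. -/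
/-- The transition matrix of the annihilation model on `St_h`. -/
noncomputable def annM (h : ℕ) (z : ℕ → ℝ) (a : ℝ) :
    Matrix (Fin h → Bool) (Fin h → Bool) ℝ :=
  Matrix.of fun A B => annP h z a (List.ofFn A) (List.ofFn B)

/-! ### Weighted sums and step operators -/

/-- The sum of `annWeightAux h z a c u * g u` over the words `u` of length `n`, defined by recursion
on the first letter of `u`. -/
noncomputable def weightInt (h : ℕ) (z : ℕ → ℝ) (a : ℝ) : ℕ → ℕ → (List Bool → ℝ) → ℝ
  | _, 0, g => g []
  | c, n + 1, g =>
      (∑ j ∈ Finset.Icc 1 (c + 1), z j) * weightInt h z a c n (fun u => g (true :: u))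
        + ((∑ m ∈ Finset.Icc (c + 2) h, z m) + a)
          * weightInt h z a (c + 1) n (fun u => g (false :: u))

/-- The action on `g` of the fillings with `i ≥ c + 2`, as seen after `c + 1` letters `∘` have
already been passed: the filling `i` then acts on the remaining word with index `i - (c + 1)`. -/
noncomputable def fillOp (h : ℕ) (z : ℕ → ℝ) (a : ℝ) (c : ℕ) (g : List Bool → ℝ)
    (u : List Bool) : ℝ :=
  (∑ i ∈ Finset.Icc (c + 2) h, z i * g (fillAtOne (i - (c + 1)) u)) + a * g u

/-- The one-step operator on functions of reversed words: `u` is the part of the old word that is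
kept. -/
noncomputable def stepOp (h : ℕ) (z : ℕ → ℝ) (a : ℝ) (g : List Bool → ℝ) (u : List Bool) : ℝ :=
  (∑ i ∈ Finset.Icc 1 h, z i * g (fillAtOne i (false :: u))) + a * g (false :: u)

/-! ### Filling a letter -/

theorem fillAtOne_true (i : ℕ) (u : List Bool) :
    fillAtOne i (true :: u) = true :: fillAtOne i u := by
  cases i <;> rfl

theorem fillAtOne_length (i : ℕ) (u : List Bool) : (fillAtOne i u).length = u.length := by
  induction u generalizing i with
  | nil => simp [fillAtOne]
  | cons b u ih =>
    cases b
    · match i with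
      | 0 => rfl
      | 1 => rfl
      | i + 2 => simp [fillAtOne, ih]
    · simp [fillAtOne_true, ih]

theorem fillAtOne_of_count_lt (i : ℕ) (u : List Bool) (hi : u.count false < i) :
    fillAtOne i u = u := by
  induction u generalizing i with
  | nil => simp [fillAtOne]
  | cons b u ih =>
    cases b
    · match i with
      | 0 => rfl
      | 1 => simp at hi
      | i + 2 =>
        rw [List.count_cons_self] at hi
        simp [fillAtOne, ih (i + 1) (by omega)]
    · rw [fillAtOne_true, ih i (by simpa using hi)]

theorem take_fillAtOne (m i : ℕ) (u : List Bool) :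
    (fillAtOne i u).take m = fillAtOne i (u.take m) := by
  induction u generalizing i m with
  | nil => simp [fillAtOne]
  | cons b u ih =>
    cases m with
    | zero => simp [fillAtOne]
    | succ m =>
      cases b
      · match i with
        | 0 => simp [fillAtOne]
        | 1 => simp [fillAtOne]
        | i + 2 => simp [fillAtOne, ih]
      · simp [fillAtOne_true, ih]

/-! ### Invariance of the weight under one step -/

theorem weightInt_add (h : ℕ) (z : ℕ → ℝ) (a : ℝ) (c n : ℕ) (f g : List Bool → ℝ) :
    weightInt h z a c n (fun u => f u + g u)
      = weightInt h z a c n f + weightInt h z a c n g := by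
  induction n generalizing c f g with
  | zero => rfl
  | succ n ih => simp only [weightInt, ih]; ring

theorem weightInt_smul (h : ℕ) (z : ℕ → ℝ) (a : ℝ) (c n : ℕ) (r : ℝ) (g : List Bool → ℝ) :
    weightInt h z a c n (fun u => r * g u) = r * weightInt h z a c n g := by
  induction n generalizing c g with
  | zero => rfl
  | succ n ih => simp only [weightInt, ih]; ring

theorem weightInt_indicator (h : ℕ) (z : ℕ → ℝ) (a : ℝ) (c : ℕ) (v : List Bool) :
    weightInt h z a c v.length (fun u => if u = v then 1 else 0) = annWeightAux h z a c v := by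
  have h0 : ∀ c n, weightInt h z a c n (fun _ => 0) = 0 := fun c n => by
    simpa using weightInt_smul h z a c n 0 (fun _ => 0)
  induction v generalizing c with
  | nil => simp [weightInt, annWeightAux]
  | cons b v ih =>
    cases b <;> simp [weightInt, annWeightAux, ih, h0]

theorem fillOp_true (h : ℕ) (z : ℕ → ℝ) (a : ℝ) (c : ℕ) (g : List Bool → ℝ) (u : List Bool) :
    fillOp h z a c g (true :: u) = fillOp h z a c (fun u => g (true :: u)) u := by
  simp only [fillOp, fillAtOne_true]

theorem fillOp_false (h : ℕ) (z : ℕ → ℝ) (a : ℝ) (c : ℕ) (hc : c + 2 ≤ h) (g : List Bool → ℝ)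
    (u : List Bool) :
    fillOp h z a c g (false :: u)
      = z (c + 2) * g (true :: u) + fillOp h z a (c + 1) (fun u => g (false :: u)) u := by
  have hs : ∀ i ∈ Finset.Icc (c + 1 + 2) h,
      z i * g (fillAtOne (i - (c + 1)) (false :: u))
        = z i * g (false :: fillAtOne (i - (c + 1 + 1)) u) := by
    intro i hi
    obtain ⟨k, rfl⟩ := Nat.exists_eq_add_of_le (Finset.mem_Icc.1 hi).1
    rw [show c + 1 + 2 + k - (c + 1) = k + 2 by omega,
      show c + 1 + 2 + k - (c + 1 + 1) = k + 1 by omega]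
    rfl
  have h1 : c + 2 - (c + 1) = 1 := by omega
  simp only [fillOp]
  rw [← Finset.add_sum_Ioc_eq_sum_Icc hc, ← Finset.sum_congr rfl hs, h1, add_assoc,
    show c + 1 + 2 = c + 2 + 1 from rfl, Finset.Icc_add_one_left_eq_Ioc]
  rfl

/-- Both sides are expanded by the first letter; the two contributions with first letter `•`
combine through `(z_1 + ⋯ + z_{c+1}) + z_{c+2} = z_1 + ⋯ + z_{c+2}`. The bound on `c + n` keeps
every index `c + 2` that occurs within `{1, …, h}`. -/
theorem weightInt_fillOp (h : ℕ) (z : ℕ → ℝ) (a : ℝ) (c n : ℕ) (hn : c + 1 + n ≤ h)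
    (g : List Bool → ℝ) :
    weightInt h z a c n (fillOp h z a c g)
      = ((∑ m ∈ Finset.Icc (c + 2) h, z m) + a) * weightInt h z a (c + 1) n g := by
  induction n generalizing c g with
  | zero => simp [weightInt, fillOp, fillAtOne, add_mul, Finset.sum_mul]
  | succ n ih =>
    have hS : ∑ j ∈ Finset.Icc 1 (c + 1 + 1), z j
        = (∑ j ∈ Finset.Icc 1 (c + 1), z j) + z (c + 2) :=
      Finset.sum_Icc_succ_top (by omega) z
    simp only [weightInt, fillOp_true, fillOp_false h z a c (by omega), weightInt_add,
      weightInt_smul]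
    rw [ih c (by omega), ih (c + 1) (by omega), hS]
    ring

/-- One step sends the weight on words of length `n` to the weight on words of length `n + 1`. -/
theorem weightInt_succ_eq_step (h : ℕ) (z : ℕ → ℝ) (a : ℝ) (n : ℕ) (hn : n + 1 ≤ h)
    (g : List Bool → ℝ) :
    weightInt h z a 0 n (stepOp h z a g) = weightInt h z a 0 (n + 1) g := by
  have hstep : stepOp h z a g
      = fun u => z 1 * g (true :: u) + fillOp h z a 0 (fun u => g (false :: u)) u := by
    funext u
    have hs : ∀ i ∈ Finset.Icc (0 + 2) h,
        z i * g (fillAtOne i (false :: u)) = z i * g (false :: fillAtOne (i - (0 + 1)) u) := by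
      intro i hi
      obtain ⟨k, rfl⟩ := Nat.exists_eq_add_of_le (Finset.mem_Icc.1 hi).1
      rw [show 0 + 2 + k = k + 2 by omega]
      rfl
    simp only [stepOp, fillOp]
    rw [← Finset.add_sum_Ioc_eq_sum_Icc (show 1 ≤ h by omega), ← Finset.sum_congr rfl hs,
      add_assoc]
    rfl
  rw [hstep, weightInt_add, weightInt_smul, weightInt_fillOp h z a 0 n (by omega)]
  simp [weightInt]

/-! ### Iterating the transition matrix -/

theorem sum_indicator_ofFn (h : ℕ) (L : List Bool) (hL : L.length = h) (r : ℝ)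
    (g : List Bool → ℝ) :
    ∑ B : Fin h → Bool, (if List.ofFn B = L then r else 0) * g (List.ofFn B) = r * g L := by
  subst hL
  rw [Finset.sum_eq_single L.get]
  · simp
  · intro B _ hB
    rw [if_neg, zero_mul]
    intro e
    exact hB (List.ofFn_injective (e.trans (List.ofFn_get L).symm))
  · simp

/-- A row of the transition matrix in terms of `stepOp`. The fillings with `i` greater than the
number of `∘` act trivially, so they may be indexed by all of `{1, …, h}`. -/
theorem sum_annM (h : ℕ) (z : ℕ → ℝ) (a : ℝ) (hh : 1 ≤ h) (A : Fin h → Bool)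
    (g : List Bool → ℝ) :
    ∑ B : Fin h → Bool, annM h z a A B * g (List.ofFn B).reverse
      = stepOp h z a g ((List.ofFn A).tail.reverse) := by
  have hlen : (List.ofFn A).length = h := List.length_ofFn
  simp only [annM, Matrix.of_apply]
  generalize List.ofFn A = L at hlen
  cases L with
  | nil => simp at hlen; omega
  | cons x rest =>
    simp only [List.length_cons] at hlen
    have hk : (rest ++ [false]).count false ≤ h :=
      List.count_le_length.trans (by simp [hlen])
    have hrev : (false :: rest.reverse).count false = (rest ++ [false]).count false := by simp
    simp only [annP, add_mul, Finset.sum_add_distrib, Finset.sum_mul, List.tail_cons]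
    rw [Finset.sum_comm, sum_indicator_ofFn h _ (by simp [hlen]) _ (fun l => g l.reverse)]
    rw [Finset.sum_congr rfl fun i _ =>
      sum_indicator_ofFn h (fillFromRight i (rest ++ [false]))
        (by simp [fillFromRight, fillAtOne_length, hlen]) (z i) (fun l => g l.reverse)]
    simp only [fillFromRight, List.reverse_reverse, List.reverse_append, List.reverse_singleton,
      List.singleton_append, stepOp]
    generalize (rest ++ [false]).count false = k at hk hrev
    have hsplit : ∑ i ∈ Finset.Icc 1 h, z i * g (fillAtOne i (false :: rest.reverse))
        = (∑ i ∈ Finset.Icc 1 k, z i * g (fillAtOne i (false :: rest.reverse)))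
          + ∑ i ∈ Finset.Icc (k + 1) h, z i * g (false :: rest.reverse) := by
      rw [← Finset.sum_congr rfl (fun i hi => by
        rw [fillAtOne_of_count_lt i _ (by have := (Finset.mem_Icc.1 hi).1; omega)] :
          ∀ i ∈ Finset.Icc (k + 1) h, z i * g (fillAtOne i (false :: rest.reverse))
            = z i * g (false :: rest.reverse))]
      have h1 := Finset.sum_Ioc_consecutive
        (fun i => z i * g (fillAtOne i (false :: rest.reverse))) (Nat.zero_le k) hk
      rw [← Finset.Icc_add_one_left_eq_Ioc, ← Finset.Icc_add_one_left_eq_Ioc,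
        ← Finset.Icc_add_one_left_eq_Ioc] at h1
      exact h1.symm
    rw [hsplit, add_mul, Finset.sum_mul]
    ring

/-- After `n ≤ h` steps the first `n` letters of the reversed word are distributed according to the
weight, whatever the initial state. -/
theorem sum_pow_take (h : ℕ) (z : ℕ → ℝ) (a : ℝ) (A : Fin h → Bool) (n : ℕ) (hn : n ≤ h)
    (g : List Bool → ℝ) :
    ∑ B : Fin h → Bool, (annM h z a ^ n) A B * g ((List.ofFn B).reverse.take n)
      = weightInt h z a 0 n g := by
  induction n generalizing g with
  | zero => simp [weightInt, Matrix.one_apply]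
  | succ n ih =>
    rw [← weightInt_succ_eq_step h z a n hn, ← ih (by omega)]
    simp only [pow_succ, Matrix.mul_apply, Finset.sum_mul]
    rw [Finset.sum_comm]
    refine Finset.sum_congr rfl fun C _ => ?_
    simp only [mul_assoc, ← Finset.mul_sum]
    rw [sum_annM h z a (by omega) C (fun l => g (l.take (n + 1)))]
    -- the letter lost in a step lies beyond the first `n` letters of the reversed word
    have ht : (List.ofFn C).tail.reverse.take n = (List.ofFn C).reverse.take n := by
      have hlen : (List.ofFn C).length = h := List.length_ofFn
      generalize List.ofFn C = L at hlen
      cases L with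
      | nil => rfl
      | cons x rest =>
        simp only [List.length_cons] at hlen
        rw [List.tail_cons, List.reverse_cons, List.take_append_of_le_length (by simp; omega)]
    simp only [stepOp, take_fillAtOne, List.take_succ_cons, ht]

/-- the annihilation model reaches its stationary distribution in
exactly `h` steps: `(P^h)_{A,B} = Π(B)` for all `A, B`, and consequently `η P^h = Π`
for every probability distribution `η` on `St_h`. -/
theorem annihilation_bounded_time (h : ℕ) (z : ℕ → ℝ) (a : ℝ)
    (hz : ∀ i, 1 ≤ i → i ≤ h → 0 ≤ z i) (ha : 0 ≤ a)
    (hsum : (∑ i ∈ Finset.Icc 1 h, z i) + a = 1) :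
    (∀ A B : Fin h → Bool,
        (annM h z a ^ h) A B = annWeight h z a (List.ofFn B)) ∧
      ∀ η : (Fin h → Bool) → ℝ, (∀ A, 0 ≤ η A) → (∑ A : Fin h → Bool, η A = 1) →
        ∀ B : Fin h → Bool,
          ∑ A : Fin h → Bool, η A * (annM h z a ^ h) A B
            = annWeight h z a (List.ofFn B) := by
  have key : ∀ A B : Fin h → Bool,
      (annM h z a ^ h) A B = annWeight h z a (List.ofFn B) := by
    intro A B
    have hB : (List.ofFn B).reverse.length = h := by simp
    have hI := weightInt_indicator h z a 0 (List.ofFn B).reverse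
    rw [hB, ← sum_pow_take h z a A h le_rfl] at hI
    rw [annWeight, ← hI, Finset.sum_eq_single B]
    · rw [List.take_of_length_le hB.le, if_pos rfl, mul_one]
    · intro C _ hC
      rw [List.take_of_length_le (by simp), if_neg, mul_zero]
      exact fun e => hC (List.ofFn_injective (List.reverse_injective e))
    · simp
  refine ⟨key, fun η _ hη B => ?_⟩
  simp only [key, ← Finset.sum_mul, hη, one_mul]
end
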